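/- arXiv:2406.15164 — 7 statements merged into one kernel-verified Lean document; each statement's English description precedes it below -/
import Mathlib

section
/- Let ℓ ≥ 2 and let G be a K_ℓ-critical graph with χ(G) = k that is not isomorphic to K_k. Then for every 1 ≤ i ≤ ℓ, if H is a copy of K_i in G whose vertex set is contained in the vertex set of some copy of K_ℓ in G, then d(H) = |N(H)| ≥ k − ℓ + 3(ℓ − i). -/
/-!
The proof rests on one recolouring fact (`exists_common_nbr_of_color`): if `L` is a copy of `K_ℓ`,
then in every `(k - ℓ)`-colouring of `G - L` each colour class contains a common neighbour of `L`.
Otherwise each vertex of an offending class could take the colour of a vertex of `L` to which it is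
not adjacent, giving a `(k - 1)`-colouring of `G`. In particular `d(L) ≥ k - ℓ`, which is the
case `i = ℓ`.

The bound for smaller `i` follows by downward induction on `i`. Let `T` be the set of vertices
outside `H` that lie in a copy of `K_ℓ` containing `H`. If `H ⊆ L` with `H ≠ L`, then `T` contains
both `L \ H` and `N(L)`, so `|H ∪ T| ≥ k`. A vertex-critical `k`-chromatic graph with a clique
on at least `k` vertices is `K_k`, so `T` is not a clique, and there are distinct non-adjacent
`y, z ∈ T`. Take a copy `L₂` of `K_ℓ` containing `H` and `z`. Since `y ∉ L₂`, the colour class of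
`y` in a `(k - ℓ)`-colouring of `G - L₂` contains a common neighbour `w` of `L₂`, and `w ≠ y`
because `y` is not adjacent to `z`. Then `y, z, w` all lie in `N(H)` and none of them is
adjacent to `y`, so `d(H) ≥ d(H ∪ {y}) + 3` (`nbr_card_step`).
-/

open SimpleGraph

/-- A graph `G` is `K_ℓ`-critical if it contains `K_ℓ` as a subgraph, deleting any vertex
drops the chromatic number by one, and deleting the vertex set of any copy of `K_ℓ`
drops the chromatic number by `ℓ`. -/
def IsKCritical {V : Type*} (G : SimpleGraph V) (ℓ : ℕ) : Prop :=
  (∃ s : Finset V, G.IsNClique ℓ s) ∧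
  (∀ v : V, (G.induce ({v}ᶜ : Set V)).chromaticNumber + 1 = G.chromaticNumber) ∧
  (∀ s : Finset V, G.IsNClique ℓ s →
    (G.induce ((↑s : Set V)ᶜ)).chromaticNumber + (ℓ : ℕ∞) = G.chromaticNumber)

/-- Every colour class of an `m`-colouring of `G - L` meets the common neighbourhood of `L`,
provided `G` cannot be coloured with fewer than `m + |L|` colours. -/
lemma exists_common_nbr_of_color {V : Type*} (G : SimpleGraph V) (L : Finset V) (m : ℕ)
    (hχ : ∀ n : ℕ, G.Colorable n → m + L.card ≤ n)
    (C : (G.induce ((↑L : Set V)ᶜ)).Coloring (Fin m)) (c : Fin m) :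
    ∃ w : ((↑L : Set V)ᶜ : Set V), C w = c ∧ ∀ u ∈ L, G.Adj u w := by
  classical
  by_contra hcon
  push Not at hcon
  choose f hfL hf using hcon
  -- The recolouring: `L` keeps its own colours, class `c` is distributed among them.
  let D : V → {c' : Fin m // c' ≠ c} ⊕ L := fun v =>
    if hv : v ∈ L then Sum.inr ⟨v, hv⟩
    else if hc : C ⟨v, by simpa using hv⟩ = c then
      Sum.inr ⟨f ⟨v, by simpa using hv⟩ hc, hfL _ hc⟩
    else Sum.inl ⟨C ⟨v, by simpa using hv⟩, hc⟩
  have hD : ∀ {a b : V}, G.Adj a b → D a ≠ D b := by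
    intro a b hab heq
    by_cases ha : a ∈ L <;> by_cases hb : b ∈ L
    · simp only [D, ha, hb, dif_pos, Sum.inr.injEq, Subtype.mk.injEq] at heq
      exact hab.ne heq
    · by_cases hcb : C ⟨b, by simpa using hb⟩ = c
      · simp only [D, ha, hb, hcb, dif_pos, dif_neg, not_false_eq_true, Sum.inr.injEq,
          Subtype.mk.injEq] at heq
        exact hf _ hcb (heq ▸ hab)
      · simp [D, ha, hb, hcb] at heq
    · by_cases hca : C ⟨a, by simpa using ha⟩ = c
      · simp only [D, ha, hb, hca, dif_pos, dif_neg, not_false_eq_true, Sum.inr.injEq,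
          Subtype.mk.injEq] at heq
        exact hf _ hca (heq ▸ hab.symm)
      · simp [D, ha, hb, hca] at heq
    · have hne : C ⟨a, by simpa using ha⟩ ≠ C ⟨b, by simpa using hb⟩ := C.valid (by simpa using hab)
      by_cases hca : C ⟨a, by simpa using ha⟩ = c <;> by_cases hcb : C ⟨b, by simpa using hb⟩ = c
      · exact hne (hca.trans hcb.symm)
      · simp [D, ha, hb, hca, hcb] at heq
      · simp [D, ha, hb, hca, hcb] at heq
      · simp only [D, ha, hb, hca, hcb, dif_neg, not_false_eq_true, Sum.inl.injEq,
          Subtype.mk.injEq] at heq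
        exact hne heq
  have hcol := (Coloring.mk D hD).colorable
  have hcard : Fintype.card ({c' : Fin m // c' ≠ c} ⊕ L) = (m - 1) + L.card := by
    simp [Fintype.card_subtype_compl]
  have := hχ _ hcol
  rw [hcard] at this
  have := c.pos
  omega

/-- In a `k`-chromatic `K_ℓ`-critical graph, the graph left after deleting a copy of `K_ℓ` has a
colouring with `m` colours, `m + ℓ = k`, each of whose classes meets the common neighbourhood of
the deleted copy. -/
lemma exists_full_coloring {V : Type*} [Fintype V] {ℓ k : ℕ} {G : SimpleGraph V}
    (hG : IsKCritical G ℓ) (hk : G.chromaticNumber = (k : ℕ∞)) {L : Finset V}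
    (hL : G.IsNClique ℓ L) :
    ∃ m : ℕ, m + ℓ = k ∧ ∃ C : (G.induce ((↑L : Set V)ᶜ)).Coloring (Fin m),
      ∀ c, ∃ w : ((↑L : Set V)ᶜ : Set V), C w = c ∧ ∀ u ∈ L, G.Adj u w := by
  classical
  have h := hG.2.2 L hL
  rw [hk] at h
  have hne : (G.induce ((↑L : Set V)ᶜ)).chromaticNumber ≠ ⊤ := by
    intro ht
    rw [ht] at h
    simp at h
  obtain ⟨m, hm⟩ := ENat.ne_top_iff_exists.mp hne
  rw [← hm] at h
  have hmk : m + ℓ = k := by exact_mod_cast h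
  obtain ⟨C⟩ : (G.induce ((↑L : Set V)ᶜ)).Colorable m :=
    chromaticNumber_le_iff_colorable.mp hm.symm.le
  refine ⟨m, hmk, C, fun c => exists_common_nbr_of_color G L m ?_ C c⟩
  intro n hn
  have := hn.chromaticNumber_le
  rw [hk] at this
  rw [hL.card_eq, hmk]
  exact_mod_cast this

/-- The case `i = ℓ` of the bound. -/
lemma le_nbr_card_of_clique {V : Type*} [Fintype V] {ℓ k : ℕ} {G : SimpleGraph V}
    (hG : IsKCritical G ℓ) (hk : G.chromaticNumber = (k : ℕ∞)) {L : Finset V}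
    (hL : G.IsNClique ℓ L) :
    k ≤ ({v : V | ∀ u ∈ L, G.Adj u v}).ncard + ℓ := by
  obtain ⟨m, hmk, C, hC⟩ := exists_full_coloring hG hk hL
  choose w hw hadj using hC
  have hinj : Function.Injective (fun c => (w c : V)) := by
    intro a b hab
    rw [← hw a, ← hw b, Subtype.ext hab]
  have hsub : Set.range (fun c => (w c : V)) ⊆ {v : V | ∀ u ∈ L, G.Adj u v} := by
    rintro _ ⟨c, rfl⟩
    exact hadj c
  have hle := Set.ncard_le_ncard hsub (Set.toFinite _)
  rw [Set.ncard_range_of_injective hinj, Nat.card_fin] at hle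
  omega

/-- A vertex-critical `k`-chromatic graph with a clique on at least `k` vertices is `K_k`. -/
lemma card_clique_lt {V : Type*} [Fintype V] {ℓ k : ℕ} {G : SimpleGraph V}
    (hG : IsKCritical G ℓ) (hk : G.chromaticNumber = (k : ℕ∞))
    (hnc : IsEmpty (G ≃g completeGraph (Fin k))) {S : Finset V} (hS : G.IsClique (S : Set V)) :
    S.card < k := by
  classical
  by_contra! hlt
  have hall : ∀ v, v ∈ S := by
    intro v
    by_contra hv
    have h := hG.2.1 v
    rw [hk] at h
    let f : (completeGraph S) ↪g G.induce ({v}ᶜ : Set V) :=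
      { toFun := fun x => ⟨x, by
          rintro rfl
          exact hv x.2⟩
        inj' := fun a b hab => Subtype.ext (by simpa using hab)
        map_rel_iff' := by
          intro a b
          constructor
          · intro hab hne
            subst hne
            exact hab.ne rfl
          · intro hab
            exact hS a.2 b.2 (fun hne => hab (Subtype.ext hne)) }
    have hle : (S.card : ℕ∞) ≤ (G.induce ({v}ᶜ : Set V)).chromaticNumber := by
      have := chromaticNumber_mono_of_hom f.toHom
      rw [completeGraph_eq_top, chromaticNumber_top] at this
      simpa using this
    have h1 : (k : ℕ∞) + 1 ≤ k := by
      calc (k : ℕ∞) + 1 ≤ (S.card : ℕ∞) + 1 := by gcongr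
        _ ≤ _ := by gcongr
        _ = k := h
    have h2 : k + 1 ≤ k := by exact_mod_cast h1
    omega
  have hadj : ∀ a b, G.Adj a b ↔ a ≠ b := fun a b =>
    ⟨fun h => h.ne, fun h => hS (hall a) (hall b) h⟩
  have hcard : Fintype.card V = k := by
    have htop : G = ⊤ := by
      ext a b
      simp [hadj]
    rw [htop, chromaticNumber_top] at hk
    exact_mod_cast hk
  let e := Fintype.equivFinOfCardEq hcard
  exact hnc.false
    { toEquiv := e
      map_rel_iff' := by
        intro a b
        simp [hadj] }

/-- The gain of three: if `y` and `z` are distinct non-adjacent vertices and `H ∪ {z}` lies in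
a copy of `K_ℓ`, adding `y ∈ N(H)` to `H` loses at least three common neighbours. -/
lemma nbr_card_step {V : Type*} [Fintype V] [DecidableEq V] {ℓ k : ℕ} {G : SimpleGraph V}
    (hG : IsKCritical G ℓ) (hk : G.chromaticNumber = (k : ℕ∞)) {H L : Finset V} {y z : V}
    (hL : G.IsNClique ℓ L) (hHL : H ⊆ L) (hz : z ∈ L) (hzH : z ∉ H)
    (hy : ∀ u ∈ H, G.Adj u y) (hyz : y ≠ z) (hadj : ¬ G.Adj y z) :
    ({v : V | ∀ u ∈ insert y H, G.Adj u v}).ncard + 3 ≤ ({v : V | ∀ u ∈ H, G.Adj u v}).ncard := by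
  obtain ⟨m, -, C, hC⟩ := exists_full_coloring hG hk hL
  have hyL : y ∉ L := fun h => hadj (hL.isClique h hz hyz)
  let y' : ((↑L : Set V)ᶜ : Set V) := ⟨y, by simpa using hyL⟩
  obtain ⟨w, hw, hwL⟩ := hC (C y')
  have hzw : G.Adj z w := hwL z hz
  have hwy : (w : V) ≠ y := fun h => hadj (h ▸ hzw.symm)
  have hyw : ¬ G.Adj y w := fun h => C.valid (show (G.induce _).Adj y' w from h) hw.symm
  have h3 : ({y, z, (w : V)} : Set V).ncard = 3 := by
    rw [Set.ncard_eq_three]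
    exact ⟨y, z, w, hyz, hwy.symm, hzw.ne, rfl⟩
  have hdisj : Disjoint {v : V | ∀ u ∈ insert y H, G.Adj u v} ({y, z, (w : V)} : Set V) := by
    rw [Set.disjoint_right]
    rintro v (rfl | rfl | rfl) hv
    · exact (hv v (Finset.mem_insert_self _ _)).ne rfl
    · exact hadj (hv y (Finset.mem_insert_self _ _))
    · exact hyw (hv y (Finset.mem_insert_self _ _))
  rw [← h3, ← Set.ncard_union_eq hdisj (Set.toFinite _) (Set.toFinite _)]
  refine Set.ncard_le_ncard ?_ (Set.toFinite _)
  rintro v (hv | rfl | rfl | rfl) u hu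
  · exact hv u (Finset.mem_insert_of_mem hu)
  · exact hy u hu
  · exact hL.isClique (hHL hu) hz (fun h => hzH (h ▸ hu))
  · exact hwL u (hHL hu)

/-- If `H` is properly contained in a copy of `K_ℓ`, then two distinct non-adjacent vertices
outside `H` each lie in a copy of `K_ℓ` containing `H`. -/
lemma exists_nonadj_extensions {V : Type*} [Fintype V] [DecidableEq V] {ℓ k : ℕ}
    {G : SimpleGraph V} (hG : IsKCritical G ℓ) (hk : G.chromaticNumber = (k : ℕ∞))
    (hnc : IsEmpty (G ≃g completeGraph (Fin k))) {H L : Finset V}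
    (hL : G.IsNClique ℓ L) (hHL : H ⊂ L) :
    ∃ y z : V, y ≠ z ∧ ¬ G.Adj y z ∧
      (y ∉ H ∧ ∃ L₁, G.IsNClique ℓ L₁ ∧ H ⊆ L₁ ∧ y ∈ L₁) ∧
      (z ∉ H ∧ ∃ L₂, G.IsNClique ℓ L₂ ∧ H ⊆ L₂ ∧ z ∈ L₂) := by
  classical
  by_contra hcon
  push Not at hcon
  obtain ⟨q, hqL, hqH⟩ := Finset.exists_of_ssubset hHL
  let N : Finset V := Finset.univ.filter fun v => ∀ u ∈ L, G.Adj u v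
  -- Every vertex of `L ∪ N(L)` lies in a copy of `K_ℓ` containing `H`:
  -- a common neighbour of `L` can replace `q`.
  have hext : ∀ v ∈ L ∪ N, ∃ L₁, G.IsNClique ℓ L₁ ∧ H ⊆ L₁ ∧ v ∈ L₁ := by
    intro v hv
    rcases Finset.mem_union.mp hv with hv | hv
    · exact ⟨L, hL, hHL.1, hv⟩
    · have hvN : ∀ u ∈ L, G.Adj u v := (Finset.mem_filter.mp hv).2
      refine ⟨insert v (L.erase q), hL.insert_erase
        (fun w hw => (hvN w (Finset.sdiff_subset hw)).symm) hqL, ?_, Finset.mem_insert_self _ _⟩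
      intro u hu
      exact Finset.mem_insert_of_mem (Finset.mem_erase.mpr ⟨fun h => hqH (h ▸ hu), hHL.1 hu⟩)
  have hcl : G.IsClique ((L ∪ N : Finset V) : Set V) := by
    intro a ha b hb hab
    obtain ⟨La, hLa, hHa, haL⟩ := hext a ha
    obtain ⟨Lb, hLb, hHb, hbL⟩ := hext b hb
    by_cases haH : a ∈ H
    · exact hLb.isClique (hHb haH) hbL hab
    by_cases hbH : b ∈ H
    · exact hLa.isClique haL (hHa hbH) hab
    by_contra hnadj
    exact hcon a b hab hnadj ⟨haH, La, hLa, hHa, haL⟩ hbH Lb hLb hHb hbL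
  have hlt := card_clique_lt hG hk hnc hcl
  have hdisj : Disjoint L N := by
    rw [Finset.disjoint_left]
    intro v hv hvN
    exact ((Finset.mem_filter.mp hvN).2 v hv).ne rfl
  have hN : ({v : V | ∀ u ∈ L, G.Adj u v}).ncard = N.card := by
    rw [← Set.ncard_coe_finset]
    simp [N]
  have hle := le_nbr_card_of_clique hG hk hL
  rw [Finset.card_union_of_disjoint hdisj, hL.card_eq] at hlt
  omega

theorem stmt12 {V : Type*} [Fintype V] (ℓ k : ℕ) (hℓ : 2 ≤ ℓ)
    (G : SimpleGraph V) (hG : IsKCritical G ℓ)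
    (hk : G.chromaticNumber = (k : ℕ∞))
    (hnc : IsEmpty (G ≃g completeGraph (Fin k)))
    (i : ℕ) (hi1 : 1 ≤ i) (hiℓ : i ≤ ℓ)
    (H : Finset V) (hH : G.IsNClique i H)
    (hsub : ∃ L : Finset V, G.IsNClique ℓ L ∧ H ⊆ L) :
    k - ℓ + 3 * (ℓ - i) ≤ ({v : V | ∀ u ∈ H, G.Adj u v}).ncard := by
  classical
  obtain ⟨n, hn⟩ : ∃ n, n = ℓ - i := ⟨_, rfl⟩
  induction n generalizing i H with
  | zero =>
    obtain ⟨L, hL, hHL⟩ := hsub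
    have hHeq : H = L := Finset.eq_of_subset_of_card_le hHL (by
      rw [hL.card_eq, hH.card_eq]
      omega)
    subst hHeq
    have := le_nbr_card_of_clique hG hk hL
    omega
  | succ n ih =>
    obtain ⟨L, hL, hHL⟩ := hsub
    have hss : H ⊂ L := by
      refine Finset.ssubset_iff_subset_ne.mpr ⟨hHL, ?_⟩
      rintro rfl
      have h1 := hL.card_eq
      have h2 := hH.card_eq
      omega
    obtain ⟨y, z, hyz, hadj, ⟨hyH, L₁, hL₁, hHL₁, hyL₁⟩, hzH, L₂, hL₂, hHL₂, hzL₂⟩ :=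
      exists_nonadj_extensions hG hk hnc hL hss
    have hy : ∀ u ∈ H, G.Adj u y := fun u hu =>
      hL₁.isClique (hHL₁ hu) hyL₁ (fun h => hyH (h ▸ hu))
    have hstep := nbr_card_step hG hk hL₂ hHL₂ hzL₂ hzH hy hyz hadj
    have hrec := ih (i + 1) (by omega) (by omega) (insert y H)
      (hH.insert fun u hu => (hy u hu).symm)
      ⟨L₁, hL₁, Finset.insert_subset hyL₁ hHL₁⟩ (by omega)
    omega
end

section
/- Let ℓ ≥ 2 and let G be a K_ℓ-critical graph. Let x be any vertex of G and let v be a vertex lying on a copy L_0 of K_ℓ with x ∉ V(L_0) such that L_0 contains a vertex outside N[x]. Then v has at least ℓ neighbors outside of N[x]. -/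
/-!
Write `N[x]` for `insert x (G.neighborSet x)`.  The key fact (`exists_common_neighbor`): if `L` is
a copy of `K_ℓ` with `x ∉ L` and `L ⊄ N[x]`, then some vertex `c ∉ N[x]` is adjacent to all of `L`.
Indeed, colour `G - L` with `χ(G) - ℓ` colours and let `C` be the colour class of `x`.  If every
vertex of `C` had a non-neighbour in `L`, the vertices of `C` could be distributed over the `ℓ`
singleton classes of `L`, which would colour `G` with `χ(G) - 1` colours.  So some `c ∈ C` is
adjacent to all of `L`; it differs from `x` because `L ⊄ N[x]`, and it is not adjacent to `x`
because `C` is independent.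

If some `w ∈ L` with `w ≠ v` lies in `N(x)`, replace `w` by `c`: this is again a copy of `K_ℓ`
through `v` satisfying the hypotheses, with fewer vertices in `N(x) \ {v}`.  By induction all of
`L \ {v}` may be assumed to lie outside `N[x]`, and then these `ℓ - 1` vertices together with `c`
are `ℓ` neighbours of `v` outside `N[x]`.
-/

open SimpleGraph

/-- Every copy of `K_ℓ` that avoids `x` and is not contained in `N[x]` has a common neighbour
outside `N[x]`. -/
lemma exists_common_neighbor {V : Type*} [Fintype V] (ℓ : ℕ)
    (G : SimpleGraph V) (hG : IsKCritical G ℓ) (x : V) (L : Finset V) (hL : G.IsNClique ℓ L)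
    (hx : x ∉ L) (hout : ∃ u ∈ L, u ∉ insert x (G.neighborSet x)) :
    ∃ c, c ∉ insert x (G.neighborSet x) ∧ ∀ z ∈ L, G.Adj c z := by
  classical
  by_contra! hno
  obtain ⟨u, huL, hu⟩ := hout
  have hux : ¬ G.Adj x u := fun h => hu (Or.inr h)
  have hfin : (G.induce ((↑L : Set V)ᶜ)).chromaticNumber ≠ ⊤ :=
    chromaticNumber_ne_top_iff_exists.2 ⟨_, colorable_of_fintype _⟩
  obtain ⟨m, hm⟩ := ENat.ne_top_iff_exists.1 hfin
  have hchi := hG.2.2 L hL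
  rw [← hm] at hchi
  obtain ⟨C⟩ : (G.induce ((↑L : Set V)ᶜ)).Colorable m :=
    chromaticNumber_le_iff_colorable.1 hm.symm.le
  let x' : ((↑L : Set V)ᶜ : Set V) := ⟨x, by simpa using hx⟩
  have hf : ∀ c : ((↑L : Set V)ᶜ : Set V), ∃ z : L, C c = C x' → ¬ G.Adj c z := by
    intro c
    by_cases hc : C c = C x'
    · by_cases hcx : (c : V) = x
      · exact ⟨⟨u, huL⟩, fun _ => by rw [hcx]; exact hux⟩
      · have hadj : ¬ G.Adj x c := fun h =>
          C.valid (v := x') (w := c) (by simpa [x'] using h) hc.symm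
        obtain ⟨z, hz, hcz⟩ := hno c (by
          rintro (h | h)
          · exact hcx h
          · exact hadj h)
        exact ⟨⟨z, hz⟩, fun _ => hcz⟩
    · exact ⟨⟨u, huL⟩, fun h => absurd h hc⟩
  choose f hf using hf
  -- The class of `x` is spread over the singleton classes of `L`; the other classes are kept.
  let D : V → {i : Fin m // i ≠ C x'} ⊕ L := fun z =>
    if h : z ∈ L then Sum.inr ⟨z, h⟩
    else if h' : C ⟨z, by simpa using h⟩ = C x' then Sum.inr (f ⟨z, by simpa using h⟩)
    else Sum.inl ⟨C ⟨z, by simpa using h⟩, h'⟩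
  have hD : ∀ {a b : V}, G.Adj a b → D a ≠ D b := by
    intro a b hab heq
    have key : ∀ (ha : a ∉ L) (hb : b ∉ L),
        C ⟨a, by simpa using ha⟩ ≠ C ⟨b, by simpa using hb⟩ := fun ha hb =>
      C.valid (by simpa using hab)
    simp only [D] at heq
    split_ifs at heq with h1 h2 h3 h4 h5 h6
    · have := congrArg Subtype.val (Sum.inr.inj heq)
      exact hab.ne this
    · have := congrArg Subtype.val (Sum.inr.inj heq)
      apply hf _ h3
      rw [← this]
      exact hab.symm
    · have := congrArg Subtype.val (Sum.inr.inj heq)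
      apply hf _ h4
      rw [this]
      exact hab
    · exact key h1 ‹_› (h4.trans (Eq.symm ‹_›))
    · exact key h1 ‹_› (congrArg Subtype.val (Sum.inl.inj heq))
  have hcol := (Coloring.mk D hD).colorable
  have hle := hcol.chromaticNumber_le
  have hcard : Fintype.card ({i : Fin m // i ≠ C x'} ⊕ L) = m - 1 + ℓ := by
    simp [Fintype.card_subtype_compl, hL.card_eq]
  rw [hcard, ← hchi] at hle
  have hle' : m + ℓ ≤ m - 1 + ℓ := by exact_mod_cast hle
  have : 0 < m := (C x').pos
  omega

theorem stmt13 {V : Type*} [Fintype V] (ℓ : ℕ) (hℓ : 2 ≤ ℓ)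
    (G : SimpleGraph V) (hG : IsKCritical G ℓ)
    (x v : V) (L₀ : Finset V) (hL₀ : G.IsNClique ℓ L₀)
    (hv : v ∈ L₀) (hx : x ∉ L₀)
    (hout : ∃ u ∈ L₀, u ∉ insert x (G.neighborSet x)) :
    ℓ ≤ (G.neighborSet v \ insert x (G.neighborSet x)).ncard := by
  classical
  induction hn : (L₀.filter (fun w => G.Adj x w ∧ w ≠ v)).card using Nat.strong_induction_on
    generalizing L₀ with
  | _ n ih =>
  obtain ⟨c, hc, hcL⟩ := exists_common_neighbor ℓ G hG x L₀ hL₀ hx hout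
  have hcx : ¬ G.Adj x c := fun h => hc (Or.inr h)
  have hcL₀ : c ∉ L₀ := fun h => G.loopless.irrefl c (hcL c h)
  by_cases hw : ∃ w ∈ L₀, G.Adj x w ∧ w ≠ v
  · obtain ⟨w, hwL, hxw, hwv⟩ := hw
    have hcl : G.IsNClique ℓ (insert c (L₀.erase w)) := by
      have h := (hL₀.erase_of_mem hwL).insert (a := c)
        (fun b hb => hcL b (Finset.mem_of_mem_erase hb))
      rwa [Nat.sub_add_cancel (by omega)] at h
    obtain ⟨u, huL, hu⟩ := hout
    refine ih _ ?_ (insert c (L₀.erase w)) hcl ?_ ?_ ?_ rfl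
    · rw [← hn]
      apply Finset.card_lt_card
      rw [Finset.ssubset_iff_of_subset]
      · exact ⟨w, by simp [hwL, hxw, hwv], by simp [(hcL w hwL).ne']⟩
      · intro z hz
        simp only [Finset.mem_filter, Finset.mem_insert, Finset.mem_erase] at hz ⊢
        obtain ⟨rfl | hz, h1, h2⟩ := hz
        · exact absurd h1 hcx
        · exact ⟨hz.2, h1, h2⟩
    · simp [hv, hwv.symm]
    · simp only [Finset.mem_insert, Finset.mem_erase, not_or]
      exact ⟨fun h => hc (Or.inl h.symm), fun h => hx h.2⟩
    · refine ⟨u, ?_, hu⟩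
      have : u ≠ w := fun h => hu (Or.inr (h ▸ hxw))
      simp [huL, this]
  · push Not at hw
    have hsub : ((insert c (L₀.erase v) : Finset V) : Set V) ⊆
        G.neighborSet v \ insert x (G.neighborSet x) := by
      intro z hz
      simp only [Finset.coe_insert, Finset.coe_erase, Set.mem_insert_iff, Set.mem_sdiff,
        Finset.mem_coe, Set.mem_singleton_iff] at hz
      obtain rfl | ⟨hzL, hzv⟩ := hz
      · exact ⟨(hcL v hv).symm, hc⟩
      · refine ⟨hL₀.isClique hv hzL (Ne.symm hzv), ?_⟩
        rintro (h | h)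
        · exact hx (h ▸ hzL)
        · exact hzv (hw z hzL h)
    have hle := Set.ncard_le_ncard hsub (Set.toFinite _)
    rw [Set.ncard_coe_finset, Finset.card_insert_of_notMem
      (fun h => hcL₀ (Finset.mem_of_mem_erase h)), Finset.card_erase_of_mem hv,
      hL₀.card_eq] at hle
    omega
end

section
/- If G is a triangle-critical claw-free graph with chromatic number χ(G) = 8, then G ≅ K_8. -/
/-!
Write `χ(G) = 8`, so that `G` is not 7-colorable, `G - v` is 7-colorable for every vertex `v`, and
`G - T` is 5-colorable for every triangle `T`.

* In a 5-coloring of `G - {x, y, z}`, for a triangle `xyz`, every color class contains a common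
  neighbor of `x`, `y`, `z` (`exists_common_neighbor`): otherwise `x` moves into the class, and each
  neighbor of `x` in the class moves to the color of `y` or that of `z`, a 7-coloring of `G`.
* Every edge `xy` lies in a triangle (`exists_triangle`): otherwise claw-freeness makes `N[x] \ {y}`
  and `N[y] \ {x}` disjoint cliques of order at least 7, and deleting a triangle from the first
  leaves the second, which is not 5-colorable.
* If `deg x ≤ 9`, then `N(x)` is a clique (`neighbors_clique`): a nonadjacent pair `y`, `b` in `N(x)`
  produces, by two applications of the first point, two more non-neighbors of `b` in `N(x)`, while
  the edge `xb` has at least 6 common neighbors; in total `deg x ≥ 10`. So `N[x]` is a clique of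
  order at least 8, and criticality forces `G = K_8`.
* If `deg v ≥ 10`, every triangle `T` avoiding `v` contains two neighbors of `v`
  (`degree_le_nine`): each class of a 5-coloring of `G - T` has at most two neighbors of `v` by
  claw-freeness, and the class of `v` has none. Hence a vertex `w` not adjacent to `v` satisfies
  `N(w) ⊆ N(v)`, since each of its edges lies in a triangle; but then a 7-coloring of `G - w`
  extends to `w` by the color of `v`. So `v` is adjacent to all other vertices.

Thus `G` is complete in either case.
-/

open SimpleGraph

/-- A graph is claw-free if it has no induced subgraph isomorphic to `K_{1,3}`. -/
def ClawFree {V : Type*} (G : SimpleGraph V) : Prop :=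
  ¬ ∃ a b c d : V, b ≠ c ∧ b ≠ d ∧ c ≠ d ∧
    G.Adj a b ∧ G.Adj a c ∧ G.Adj a d ∧ ¬ G.Adj b c ∧ ¬ G.Adj b d ∧ ¬ G.Adj c d

namespace TriangleCritical

variable {V : Type*} {G : SimpleGraph V}

/-- `c` is a proper coloring of `G - S`; its values on `S` are irrelevant. -/
def ProperOff {α : Type*} (G : SimpleGraph V) (S : Set V) (c : V → α) : Prop :=
  ∀ a b, a ∉ S → b ∉ S → G.Adj a b → c a ≠ c b

lemma exists_properOff {n : ℕ} (hn : 0 < n) {S : Set V} (h : (G.induce Sᶜ).Colorable n) :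
    ∃ c : V → Fin n, ProperOff G S c := by
  classical
  obtain ⟨C⟩ := h
  refine ⟨fun v => if hv : v ∈ Sᶜ then C ⟨v, hv⟩ else ⟨0, hn⟩, ?_⟩
  intro a b ha hb hab
  have ha' : a ∈ Sᶜ := ha
  have hb' : b ∈ Sᶜ := hb
  simp only [ha', hb', dif_pos]
  exact C.valid (by simpa using hab)

lemma not_colorable_seven (hχ : G.chromaticNumber = 8) : ¬ G.Colorable 7 := by
  intro h
  have := h.chromaticNumber_le
  rw [hχ] at this
  exact absurd this (by decide)

lemma exists_vertex_coloring (hG : IsKCritical G 3) (hχ : G.chromaticNumber = 8) (v : V) :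
    ∃ c : V → Fin 7, ProperOff G {v} c := by
  apply exists_properOff (by norm_num)
  have h := hG.2.1 v
  rw [hχ] at h
  rw [← chromaticNumber_le_iff_colorable]
  have h7 : (8 : ℕ∞) = ((7 : ℕ) : ℕ∞) + 1 := by norm_num
  rw [h7] at h
  exact (ENat.add_left_injective_of_ne_top ENat.one_ne_top h).le

lemma exists_triangle_coloring (hG : IsKCritical G 3) (hχ : G.chromaticNumber = 8)
    {x y z : V} (hxy : G.Adj x y) (hxz : G.Adj x z) (hyz : G.Adj y z) :
    ∃ c : V → Fin 5, ProperOff G {x, y, z} c := by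
  classical
  apply exists_properOff (by norm_num)
  have h := hG.2.2 {x, y, z} (is3Clique_triple_iff.2 ⟨hxy, hxz, hyz⟩)
  rw [hχ] at h
  rw [← chromaticNumber_le_iff_colorable]
  have h5 : (8 : ℕ∞) = ((5 : ℕ) : ℕ∞) + ((3 : ℕ) : ℕ∞) := by norm_num
  rw [h5] at h
  have := (ENat.add_left_injective_of_ne_top (ENat.natCast_ne_top 3) h).le
  rwa [Finset.coe_insert, Finset.coe_insert, Finset.coe_singleton] at this

/-- Were a class `i` to contain no common neighbor, `x` could receive color `i` after each of its
neighbors of color `i` is recolored by the color of `y` or that of `z`. -/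
lemma exists_common_neighbor (h7 : ¬ G.Colorable 7) {x y z : V}
    {c : V → Fin 5} (hc : ProperOff G {x, y, z} c) (i : Fin 5) :
    ∃ u, c u = i ∧ G.Adj x u ∧ G.Adj y u ∧ G.Adj z u := by
  classical
  by_contra hno
  push Not at hno
  apply h7
  -- The two values of `Bool` stand for the colors of `y` and `z`.
  let f : V → Fin 5 ⊕ Bool := fun u =>
    if u = x then .inl i else if u = y then .inr true else if u = z then .inr false
    else if c u = i ∧ G.Adj x u then (if G.Adj y u then .inr false else .inr true)
    else .inl (c u)
  have hf : ∀ a b, G.Adj a b → f a ≠ f b := by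
    intro a b hab
    have hc' : a ≠ x → a ≠ y → a ≠ z → b ≠ x → b ≠ y → b ≠ z → c a ≠ c b := by
      intro h1 h2 h3 h4 h5 h6
      exact hc a b (by simp [h1, h2, h3]) (by simp [h4, h5, h6]) hab
    have hne := hab.ne
    have hba := hab.symm
    have hna := hno a
    have hnb := hno b
    simp only [f]
    grind
  have := (Coloring.mk f (fun {a b} h => hf a b h) : G.Coloring (Fin 5 ⊕ Bool)).colorable
  simpa using this

lemma seven_le_degree [Fintype V] [DecidableRel G.Adj] (hG : IsKCritical G 3)
    (hχ : G.chromaticNumber = 8) (v : V) : 7 ≤ G.degree v := by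
  classical
  obtain ⟨c, hc⟩ := exists_vertex_coloring hG hχ v
  have hsurj : ∀ i : Fin 7, i ∈ (G.neighborFinset v).image c := by
    intro i
    by_contra hi
    have hi' : ∀ u, G.Adj v u → c u ≠ i := by
      intro u hu h
      exact hi (Finset.mem_image.2 ⟨u, by simpa using hu, h⟩)
    apply not_colorable_seven hχ
    refine ⟨Coloring.mk (fun u => if u = v then i else c u) ?_⟩
    intro a b hab
    have h1 := hc a b
    have h2 := hi' a
    have h3 := hi' b
    have h4 := hab.symm
    have h5 := hab.ne
    simp only [Set.mem_singleton_iff] at h1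
    grind
  have h1 : (G.neighborFinset v).image c = Finset.univ := Finset.eq_univ_of_forall hsurj
  have h2 := Finset.card_image_le (s := G.neighborFinset v) (f := c)
  rw [h1] at h2
  simpa using h2

lemma clique_card_le {n : ℕ} {S : Set V} {c : V → Fin n} (hc : ProperOff G S c) {B : Finset V}
    (hB : G.IsClique (B : Set V)) (hBS : ∀ b ∈ B, b ∉ S) : B.card ≤ n := by
  have := Finset.card_le_card_of_injOn (s := B) (t := Finset.univ) c (by simp) (by
    intro a ha b hb hab
    by_contra hne
    exact hc a b (hBS a ha) (hBS b hb) (hB ha hb hne) hab)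
  simpa using this

/-- If the edge `xy` is in no triangle, then `N[x] \ {y}` is a clique, as a nonadjacent pair in
`N(x) \ {y}` together with `y` would be a claw at `x`. -/
lemma isClique_of_no_triangle [Fintype V] [DecidableEq V] [DecidableRel G.Adj] (hcf : ClawFree G)
    {x y : V} (hxy : G.Adj x y) (hno : ∀ z, G.Adj x z → ¬ G.Adj y z) :
    G.IsClique (insert x ((G.neighborFinset x).erase y) : Finset V) := by
  intro p hp q hq hpq
  simp only [Finset.coe_insert, Set.mem_insert_iff, Finset.mem_coe, Finset.mem_erase,
    mem_neighborFinset] at hp hq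
  rcases hp with rfl | ⟨hpy, hxp⟩
  · rcases hq with rfl | ⟨_, hq⟩
    · exact absurd rfl hpq
    · exact hq
  · rcases hq with rfl | ⟨hqy, hxq⟩
    · exact hxp.symm
    · by_contra hna
      exact hcf ⟨x, y, p, q, hpy.symm, hqy.symm, hpq, hxy, hxp, hxq, hno p hxp, hno q hxq, hna⟩

lemma exists_triangle [Fintype V] (hG : IsKCritical G 3) (hcf : ClawFree G)
    (hχ : G.chromaticNumber = 8) {x y : V} (hxy : G.Adj x y) :
    ∃ z, G.Adj x z ∧ G.Adj y z := by
  classical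
  by_contra hno
  push Not at hno
  have hA := isClique_of_no_triangle hcf hxy hno
  have hB := isClique_of_no_triangle hcf hxy.symm (fun z hy hx => hno z hx hy)
  have card_ge : ∀ a b, G.Adj a b →
      7 ≤ (insert a ((G.neighborFinset a).erase b)).card := by
    intro a b hab
    rw [Finset.card_insert_of_notMem (by simp), Finset.card_erase_of_mem (by simpa using hab)]
    have := seven_le_degree hG hχ a
    rw [← card_neighborFinset_eq_degree] at this
    omega
  obtain ⟨T, hTA, hT3⟩ := Finset.exists_subset_card_eq (show 3 ≤ _ from
    le_trans (by norm_num) (card_ge x y hxy))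
  obtain ⟨p, q, r, hpq, hpr, hqr, rfl⟩ := Finset.card_eq_three.1 hT3
  have hp := hTA (show p ∈ _ by simp)
  have hq := hTA (show q ∈ _ by simp)
  have hr := hTA (show r ∈ _ by simp)
  obtain ⟨c, hc⟩ := exists_triangle_coloring hG hχ (hA hp hq hpq) (hA hp hr hpr) (hA hq hr hqr)
  have hdisj : ∀ b ∈ insert y ((G.neighborFinset y).erase x),
      b ∉ insert x ((G.neighborFinset x).erase y) := by
    intro b hb
    simp only [Finset.mem_insert, Finset.mem_erase, mem_neighborFinset, not_or] at hb ⊢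
    have := hno b
    have := hxy.ne
    grind
  have := clique_card_le hc hB (by
    intro b hb hbT
    apply hdisj b hb
    simp only [Set.mem_insert_iff, Set.mem_singleton_iff] at hbT
    rcases hbT with rfl | rfl | rfl <;> assumption)
  have := card_ge y x hxy.symm
  omega

/-- The third vertex `z` of a triangle on the edge `xb` and the five common neighbors of `x`, `b`,
`z` give six common neighbors of `x` and `b`. -/
lemma six_le_common [Fintype V] [DecidableEq V] [DecidableRel G.Adj] (hG : IsKCritical G 3)
    (hcf : ClawFree G) (hχ : G.chromaticNumber = 8) {x b : V} (hxb : G.Adj x b) :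
    6 ≤ (G.neighborFinset x ∩ G.neighborFinset b).card := by
  obtain ⟨z, hxz, hbz⟩ := exists_triangle hG hcf hχ hxb
  obtain ⟨c, hc⟩ := exists_triangle_coloring hG hχ hxb hxz hbz
  choose u hu using exists_common_neighbor (not_colorable_seven hχ) hc
  have hinj : Function.Injective u := by
    intro i j hij
    rw [← (hu i).1, ← (hu j).1, hij]
  have hsub : insert z (Finset.univ.image u) ⊆ G.neighborFinset x ∩ G.neighborFinset b := by
    intro w hw
    rcases Finset.mem_insert.1 hw with rfl | hw
    · simp [hxz, hbz]
    · obtain ⟨i, -, rfl⟩ := Finset.mem_image.1 hw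
      simp [(hu i).2.1, (hu i).2.2.1]
  have hz : z ∉ Finset.univ.image u := by
    intro hz
    obtain ⟨i, -, hi⟩ := Finset.mem_image.1 hz
    exact (hu i).2.2.2.ne hi.symm
  have h := Finset.card_le_card hsub
  rw [Finset.card_insert_of_notMem hz, Finset.card_image_of_injective _ hinj] at h
  simpa using h

/-- The class of `b` contains a common neighbor of `x`, `y`, `z`, and `b` is not one itself. -/
lemma exists_nonneighbor (hG : IsKCritical G 3) (hχ : G.chromaticNumber = 8) {x y z b : V}
    (hxy : G.Adj x y) (hxz : G.Adj x z) (hyz : G.Adj y z) (hxb : G.Adj x b) (hby : b ≠ y)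
    (hbz : b ≠ z) (hyb : ¬ G.Adj y b) :
    ∃ u, u ≠ b ∧ ¬ G.Adj b u ∧ G.Adj x u ∧ G.Adj y u ∧ G.Adj z u := by
  obtain ⟨c, hc⟩ := exists_triangle_coloring hG hχ hxy hxz hyz
  obtain ⟨u, hcu, hxu, hyu, hzu⟩ :=
    exists_common_neighbor (not_colorable_seven hχ) hc (c b)
  refine ⟨u, ?_, ?_, hxu, hyu, hzu⟩
  · rintro rfl
    exact hyb hyu
  · intro hbu
    refine hc b u ?_ ?_ hbu hcu.symm
    · simp [hxb.ne', hby, hbz]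
    · simp [hxu.ne', hyu.ne', hzu.ne']

lemma neighbors_clique [Fintype V] [DecidableRel G.Adj] (hG : IsKCritical G 3) (hcf : ClawFree G)
    (hχ : G.chromaticNumber = 8) {x : V} (hx : G.degree x ≤ 9) {y b : V}
    (hxy : G.Adj x y) (hxb : G.Adj x b) (hyb : y ≠ b) : G.Adj y b := by
  classical
  by_contra hna
  obtain ⟨z, hxz, hyz⟩ := exists_triangle hG hcf hχ hxy
  obtain ⟨u, hub, hbu, hxu, hyu, -⟩ := exists_nonneighbor hG hχ hxy hxz hyz hxb hyb.symm
    (by rintro rfl; exact hna hyz) hna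
  obtain ⟨w, hwb, hbw, hxw, hyw, huw⟩ :=
    exists_nonneighbor hG hχ hxy hxu hyu hxb hyb.symm hub.symm hna
  have h6 := six_le_common hG hcf hχ hxb
  -- Beside the common neighbors of `x` and `b`, the set `N(x)` contains `b`, `y`, `u` and `w`.
  have hdisj : Disjoint (G.neighborFinset x ∩ G.neighborFinset b) {b, y, u, w} := by
    rw [Finset.disjoint_left]
    intro p hp
    simp only [Finset.mem_inter, mem_neighborFinset] at hp
    simp only [Finset.mem_insert, Finset.mem_singleton]
    rintro (rfl | rfl | rfl | rfl)
    · exact hp.2.ne rfl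
    · exact hna hp.2.symm
    · exact hbu hp.2
    · exact hbw hp.2
  have h4 : ({b, y, u, w} : Finset V).card = 4 := by
    have h1 := hyu.ne
    have h2 := hyw.ne
    have h3 := huw.ne
    rw [Finset.card_insert_of_notMem, Finset.card_insert_of_notMem, Finset.card_insert_of_notMem,
      Finset.card_singleton] <;> simp <;> grind
  have hsub : (G.neighborFinset x ∩ G.neighborFinset b) ∪ {b, y, u, w} ⊆ G.neighborFinset x := by
    apply Finset.union_subset Finset.inter_subset_left
    intro p hp
    simp only [Finset.mem_insert, Finset.mem_singleton] at hp
    rcases hp with rfl | rfl | rfl | rfl <;> simpa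
  have h := Finset.card_le_card hsub
  rw [Finset.card_union_of_disjoint hdisj, h4, card_neighborFinset_eq_degree] at h
  omega

/-- The 5-coloring of `G - {x, y, z}` gives at most 8 neighbors of `v` outside the triangle: none in
the class of `v`, and by claw-freeness at most two in each other class. -/
lemma degree_le_nine [Fintype V] [DecidableRel G.Adj] (hG : IsKCritical G 3) (hcf : ClawFree G)
    (hχ : G.chromaticNumber = 8) {v x y z : V}
    (hxy : G.Adj x y) (hxz : G.Adj x z) (hyz : G.Adj y z) (hvx : v ≠ x) (hvy : v ≠ y) (hvz : v ≠ z)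
    (hnx : ¬ G.Adj v x) (hny : ¬ G.Adj v y) : G.degree v ≤ 9 := by
  classical
  obtain ⟨c, hc⟩ := exists_triangle_coloring hG hχ hxy hxz hyz
  have hmem : ∀ u ∈ (G.neighborFinset v).erase z, G.Adj v u ∧ u ∉ ({x, y, z} : Set V) := by
    intro u hu
    simp only [Finset.mem_erase, mem_neighborFinset] at hu
    refine ⟨hu.2, ?_⟩
    simp only [Set.mem_insert_iff, Set.mem_singleton_iff]
    rintro (rfl | rfl | rfl)
    · exact hnx hu.2
    · exact hny hu.2
    · exact hu.1 rfl
  have hmaps : ∀ u ∈ (G.neighborFinset v).erase z, c u ∈ Finset.univ.erase (c v) := by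
    intro u hu
    obtain ⟨h1, h2⟩ := hmem u hu
    rw [Finset.mem_erase]
    exact ⟨(hc v u (by simp [hvx, hvy, hvz]) h2 h1).symm, Finset.mem_univ _⟩
  have hfib : ∀ i ∈ Finset.univ.erase (c v),
      (((G.neighborFinset v).erase z).filter (fun u => c u = i)).card ≤ 2 := by
    intro i _
    by_contra! hlt
    obtain ⟨p, q, r, hp, hq, hr, hpq, hpr, hqr⟩ := Finset.two_lt_card_iff.1 hlt
    rw [Finset.mem_filter] at hp hq hr
    obtain ⟨hp1, hp2⟩ := hmem p hp.1
    obtain ⟨hq1, hq2⟩ := hmem q hq.1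
    obtain ⟨hr1, hr2⟩ := hmem r hr.1
    exact hcf ⟨v, p, q, r, hpq, hpr, hqr, hp1, hq1, hr1,
      fun h => hc p q hp2 hq2 h (hp.2.trans hq.2.symm),
      fun h => hc p r hp2 hr2 h (hp.2.trans hr.2.symm),
      fun h => hc q r hq2 hr2 h (hq.2.trans hr.2.symm)⟩
  have h8 := Finset.card_le_mul_card_image_of_maps_to hmaps 2 hfib
  rw [Finset.card_erase_of_mem (Finset.mem_univ _)] at h8
  have h9 := Finset.pred_card_le_card_erase (s := G.neighborFinset v) (a := z)
  rw [card_neighborFinset_eq_degree] at h9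
  simp at h8
  omega

/-- A 7-coloring of `G - w` would extend to `w` by the color of `v`. -/
lemma not_neighbors_subset (hG : IsKCritical G 3) (hχ : G.chromaticNumber = 8) {v w : V}
    (hvw : v ≠ w) (hsub : ∀ u, G.Adj w u → G.Adj v u) : False := by
  classical
  obtain ⟨c, hc⟩ := exists_vertex_coloring hG hχ w
  apply not_colorable_seven hχ
  refine ⟨Coloring.mk (fun u => if u = w then c v else c u) ?_⟩
  intro a b hab
  have h1 := hc a b
  have h2 := hsub a
  have h3 := hsub b
  have h4 := hab.symm
  have h5 := hab.ne
  have h6 := hc v a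
  have h7 := hc v b
  simp only [Set.mem_singleton_iff] at h1 h6 h7
  grind

lemma complete_of_ten_le [Fintype V] [DecidableRel G.Adj] (hG : IsKCritical G 3) (hcf : ClawFree G)
    (hχ : G.chromaticNumber = 8) {v w : V} (hv : 10 ≤ G.degree v) (hvw : v ≠ w) : G.Adj v w := by
  by_contra hna
  refine not_neighbors_subset hG hχ hvw fun u hwu => ?_
  by_contra hvu
  obtain ⟨a, hwa, hua⟩ := exists_triangle hG hcf hχ hwu
  have hne : v ≠ u := by
    rintro rfl
    exact hna hwu.symm
  have hne' : v ≠ a := by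
    rintro rfl
    exact hna hwa.symm
  have := degree_le_nine hG hcf hχ hwu hwa hua hvw hne hne' hna hvu
  omega

/-- A vertex outside a clique of order at least 8 could be deleted without making `G`
7-colorable. -/
lemma mem_of_clique (hG : IsKCritical G 3) (hχ : G.chromaticNumber = 8) {B : Finset V}
    (hB : G.IsClique (B : Set V)) (hcard : 8 ≤ B.card) (v : V) : v ∈ B := by
  by_contra hv
  obtain ⟨c, hc⟩ := exists_vertex_coloring hG hχ v
  have := clique_card_le hc hB (by
    intro b hb hbv
    rw [Set.mem_singleton_iff] at hbv
    exact hv (hbv ▸ hb))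
  omega

lemma eq_top [Fintype V] (hG : IsKCritical G 3) (hcf : ClawFree G)
    (hχ : G.chromaticNumber = 8) : G = ⊤ := by
  classical
  by_cases h : ∃ x, G.degree x ≤ 9
  · obtain ⟨x, hx⟩ := h
    have hclique : G.IsClique (insert x (G.neighborFinset x) : Finset V) := by
      intro p hp q hq hpq
      simp only [Finset.coe_insert, Set.mem_insert_iff, Finset.mem_coe, mem_neighborFinset] at hp hq
      rcases hp with rfl | hp
      · exact hq.resolve_left hpq.symm
      · rcases hq with rfl | hq
        · exact hp.symm
        · exact neighbors_clique hG hcf hχ hx hp hq hpq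
    have hcard : 8 ≤ (insert x (G.neighborFinset x)).card := by
      rw [Finset.card_insert_of_notMem (by simp), card_neighborFinset_eq_degree]
      have := seven_le_degree hG hχ x
      omega
    ext a b
    refine ⟨fun h => h.ne, fun h => ?_⟩
    exact hclique (mem_of_clique hG hχ hclique hcard a) (mem_of_clique hG hχ hclique hcard b) h
  · push Not at h
    ext a b
    exact ⟨fun h => h.ne, fun hab => complete_of_ten_le hG hcf hχ (h a) hab⟩

end TriangleCritical

theorem stmt14 {V : Type*} [Fintype V] (G : SimpleGraph V)
    (hG : IsKCritical G 3) (hcf : ClawFree G)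
    (hχ : G.chromaticNumber = 8) :
    Nonempty (G ≃g completeGraph (Fin 8)) := by
  have htop := TriangleCritical.eq_top hG hcf hχ
  subst htop
  rw [chromaticNumber_top] at hχ
  have hcard : Fintype.card V = 8 := by exact_mod_cast hχ
  exact ⟨Iso.completeGraph (Fintype.equivFinOfCardEq hcard)⟩
end

section
/- Let ℓ ≥ 2, let G be a K_ℓ-critical claw-free graph with χ(G) = k, and let x be a vertex of G such that there is a copy L of K_ℓ in G with V(L) ⊄ N[x]. Then the degree of x satisfies d(x) ≤ 2(k − ℓ − 1). -/
/-!
A colouring of `G - L` with `k - ℓ` colours exists for every copy `L` of `K_ℓ`. Every colour class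
`A` of it contains a vertex complete to `L` (`exists_complete_vertex`): otherwise each vertex of
`A` could join the singleton class of a non-neighbour in `L`, which would colour `G` with `k - 1`
colours.

If `L ⊄ N[x]` and `z ∈ L` is a neighbour of `x`, then the vertex `w` complete to `L` in the class
of `x` is neither equal nor adjacent to `x`, so `L - z + w` is again a copy of `K_ℓ` not contained
in `N[x]`, with fewer neighbours of `x`. Hence some copy of `K_ℓ` misses `N[x]` altogether
(`exists_clique_disjoint`). For such a copy, all of `N(x)` is coloured with the `k - ℓ - 1` colours
other than that of `x`, and by claw-freeness each colour occurs at most twice on `N(x)`.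
-/

open SimpleGraph

/-- The colouring of `G - L` given by criticality, extended to all of `V` by the colour of `x`;
only its values off `L` are meaningful. -/
lemma exists_coloring_off {V : Type*} {ℓ k : ℕ} {G : SimpleGraph V} (hG : IsKCritical G ℓ)
    (hk : G.chromaticNumber = (k : ℕ∞)) {L : Finset V} (hL : G.IsNClique ℓ L)
    {x : V} (hx : x ∉ L) :
    ∃ (m : ℕ) (D : V → Fin m), m + ℓ = k ∧
      ∀ u v, u ∉ L → v ∉ L → G.Adj u v → D u ≠ D v := by
  classical
  have h := hG.2.2 L hL
  rw [hk] at h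
  have hne : (G.induce ((↑L : Set V)ᶜ)).chromaticNumber ≠ ⊤ := by
    intro ht
    rw [ht, top_add] at h
    exact ENat.natCast_ne_top k h.symm
  obtain ⟨m, hm⟩ := ENat.ne_top_iff_exists.1 hne
  rw [← hm] at h
  have hcol : (G.induce ((↑L : Set V)ᶜ)).Colorable m :=
    chromaticNumber_le_iff_colorable.1 hm.symm.le
  obtain ⟨C⟩ := hcol
  refine ⟨m, fun v => if hv : v ∈ L then C ⟨x, by simpa using hx⟩ else C ⟨v, by simpa using hv⟩,
    by exact_mod_cast h, ?_⟩
  intro u v hu hv huv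
  simp only [hu, hv, dif_neg, not_false_iff]
  exact C.valid (by simpa using huv)

lemma exists_complete_vertex {V : Type*} {ℓ k m : ℕ} {G : SimpleGraph V}
    (hk : G.chromaticNumber = (k : ℕ∞)) {L : Finset V} (hL : G.IsNClique ℓ L)
    (D : V → Fin m) (hm : m + ℓ = k)
    (hD : ∀ u v, u ∉ L → v ∉ L → G.Adj u v → D u ≠ D v) (c : Fin m) :
    ∃ w, w ∉ L ∧ D w = c ∧ ∀ y ∈ L, G.Adj w y := by
  classical
  by_contra! hcon
  choose! g hgL hg using hcon
  -- Vertices of class `c` move to the singleton classes of the clique; all other classes stay.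
  let E : V → {i : Fin m // i ≠ c} ⊕ L := fun v =>
    if hv : v ∈ L then Sum.inr ⟨v, hv⟩
    else if hc : D v = c then Sum.inr ⟨g v, hgL v hv hc⟩
    else Sum.inl ⟨D v, hc⟩
  have hE : ∀ {u v}, G.Adj u v → E u ≠ E v := by
    intro u v huv heq
    have h1 := huv.ne
    have h2 := huv.symm
    have h3 := hD u v
    have h4 := hg u
    have h5 := hg v
    simp only [E] at heq
    split_ifs at heq <;> simp at heq <;> grind
  have hcol : G.Colorable (Fintype.card ({i : Fin m // i ≠ c} ⊕ L)) :=
    (SimpleGraph.Coloring.mk E hE).colorable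
  have hle := chromaticNumber_le_iff_colorable.2 hcol
  rw [hk] at hle
  have hle' : k ≤ Fintype.card ({i : Fin m // i ≠ c} ⊕ L) := by exact_mod_cast hle
  have hLc := hL.card_eq
  have hmpos := c.pos
  simp [Fintype.card_subtype_compl, hLc] at hle'
  omega

lemma exists_clique_disjoint {V : Type*} {ℓ k : ℕ} {G : SimpleGraph V} (hG : IsKCritical G ℓ)
    (hk : G.chromaticNumber = (k : ℕ∞)) {x : V} {L : Finset V} (hL : G.IsNClique ℓ L)
    (hnot : ∃ y ∈ L, y ≠ x ∧ ¬ G.Adj x y) :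
    ∃ L : Finset V, G.IsNClique ℓ L ∧ x ∉ L ∧ ∀ y ∈ L, ¬ G.Adj x y := by
  classical
  induction hn : (L.filter (G.Adj x)).card using Nat.strong_induction_on generalizing L with
  | _ n ih =>
  obtain ⟨y, hy, hyx, hxy⟩ := hnot
  have hx : x ∉ L := fun hx => hxy (hL.isClique hx hy hyx.symm)
  by_cases hz : ∃ z ∈ L, G.Adj x z
  · obtain ⟨z, hzL, hxz⟩ := hz
    obtain ⟨m, D, hm, hD⟩ := exists_coloring_off hG hk hL hx
    obtain ⟨w, hwL, hDw, hw⟩ := exists_complete_vertex hk hL D hm hD (D x)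
    have hxw : ¬ G.Adj x w := fun h => hD x w hx hwL h hDw.symm
    have hyz : y ≠ z := by rintro rfl; exact hxy hxz
    have hlt : ((insert w (L.erase z)).filter (G.Adj x)).card < n := by
      rw [← hn]
      apply Finset.card_lt_card
      rw [Finset.ssubset_iff_of_subset]
      · exact ⟨z, by simp [hzL, hxz], by grind⟩
      · intro v
        grind
    have hclique : G.IsNClique ℓ (insert w (L.erase z)) := by
      refine ⟨?_, ?_⟩
      · rw [Finset.coe_insert, isClique_insert]
        refine ⟨hL.isClique.subset (by simp), fun b hb _ => hw b ?_⟩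
        exact Finset.mem_of_mem_erase (Finset.mem_coe.1 hb)
      · rw [Finset.card_insert_of_notMem (by simp [hwL]), Finset.card_erase_add_one hzL,
          hL.card_eq]
    exact ih _ hlt hclique ⟨y, by simp [hy, hyz], hyx, hxy⟩ rfl
  · exact ⟨L, hL, hx, fun v hv h => hz ⟨v, hv, h⟩⟩

theorem stmt16 {V : Type*} [Fintype V] (ℓ k : ℕ) (hℓ : 2 ≤ ℓ)
    (G : SimpleGraph V) [DecidableRel G.Adj] (hG : IsKCritical G ℓ)
    (hcf : ClawFree G) (hk : G.chromaticNumber = (k : ℕ∞))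
    (x : V) (L : Finset V) (hL : G.IsNClique ℓ L)
    (hnot : ¬ ((↑L : Set V) ⊆ insert x (G.neighborSet x))) :
    G.degree x ≤ 2 * (k - ℓ - 1) := by
  classical
  have hnot' : ∃ y ∈ L, y ≠ x ∧ ¬ G.Adj x y := by
    obtain ⟨y, hy, hyn⟩ := Set.not_subset.1 hnot
    exact ⟨y, hy, by simpa using hyn⟩
  obtain ⟨M, hM, hxM, hadj⟩ := exists_clique_disjoint hG hk hL hnot'
  obtain ⟨m, D, hm, hD⟩ := exists_coloring_off hG hk hM hxM
  have hoff : ∀ v, G.Adj x v → v ∉ M := fun v hv hvM => hadj v hvM hv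
  have hmaps : ∀ v ∈ G.neighborFinset x, D v ∈ Finset.univ.erase (D x) := by
    intro v hv
    rw [mem_neighborFinset] at hv
    simpa using (hD x v hxM (hoff v hv) hv).symm
  have hfib : ∀ c ∈ Finset.univ.erase (D x),
      ((G.neighborFinset x).filter (fun v => D v = c)).card ≤ 2 := by
    intro c _
    by_contra! hlt
    obtain ⟨p, q, r, hp, hq, hr, hpq, hpr, hqr⟩ := Finset.two_lt_card_iff.1 hlt
    simp only [Finset.mem_filter, mem_neighborFinset] at hp hq hr
    have key : ∀ u v, (G.Adj x u ∧ D u = c) → (G.Adj x v ∧ D v = c) → ¬ G.Adj u v :=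
      fun u v hu hv h => hD u v (hoff u hu.1) (hoff v hv.1) h (hu.2.trans hv.2.symm)
    exact hcf ⟨x, p, q, r, hpq, hpr, hqr, hp.1, hq.1, hr.1,
      key p q hp hq, key p r hp hr, key q r hq hr⟩
  have hcard := Finset.card_le_mul_card_image_of_maps_to hmaps 2 hfib
  rw [card_neighborFinset_eq_degree, Finset.card_erase_of_mem (Finset.mem_univ _),
    Finset.card_univ, Fintype.card_fin] at hcard
  have hkm : k - ℓ = m := by omega
  rwa [hkm]
end

section
/- Let s, t be integers with 2 ≤ s ≤ t ≤ s + 2, and let G be a graph with chromatic number χ(G) = s + t − 1 > ω(G) that contains K_s as a subgraph. Then there exists a partition of the vertex set V(G) = S ⊔ T such that χ(G[S]) ≥ s and χ(G[T]) ≥ t. -/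
/-!
Suppose no such partition exists. Then deleting an `s`-clique leaves a `(t - 1)`-colourable graph
and deleting a `t`-clique leaves an `(s - 1)`-colourable graph. In particular no `s`-clique is
disjoint from a `t`-clique. Write `n = s + t - 1 = χ(G)`.

The basic tool is `rainbow`: if `|A| + k = n` and `f` is a proper `k`-colouring of `G - A`, then
every colour of `f` occurs on a common neighbour of `A`; otherwise the missing colour class could
be absorbed into the colour classes of the vertices of `A`, giving an `(n - 1)`-colouring. So `A`
has at least `k` common neighbours, which allows cliques to be moved around by exchanging vertices.
It yields an `s`-clique disjoint from any set of fewer than `t` vertices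
(`exists_disjoint_clique`), and excludes cliques of size `n - 1` (`not_clique_pred`).

If `t = s + 1`, take disjoint `s`-cliques `K` and `L`. All common neighbours of `K` lie in `L`, and
there are at least `s` of them, so `K ∪ L` is an `n`-clique, which is excluded (`odd_case`).

If `t = s` or `t = s + 2`, then `n = 2a + 1` with `a = s - 1` or `a = s`, and there are an
`(a + 1)`-clique `K` and an `a`-clique `K'` disjoint from it such that `G - K'` has a proper
`(a + 1)`-colouring `κ`. Moreover `G - A` is `(a + 1)`-colourable for every `a`-clique `A` inside an
`(a + 1)`-clique; call `A` *good* when this holds. Grow `K` by repeatedly adding vertices outside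
`K'` which see all colours of `κ` but their own among the vertices already present; let `F` be the
resulting set (`Forced`). Every partial stage `Γ` of this process is *rigid*: each of its proper
`(a + 1)`-colourings agrees with `κ` up to a permutation of the colours.

For a good `A ⊆ F`, the common neighbours outside `K'` all lie in `F` and all receive the one colour
of `κ` missing from `A`. On the other hand they are not monochromatic in any `(a + 1)`-colouring of
`G - A`, for otherwise `rainbow` forces `A ∪ K'` to be a `2a`-clique (`not_monochromatic`).
Exchanging vertices gives a good `A ⊆ F \ K`. Choose a rigid stage `Γ` that is maximal among those
for which a good `A ⊆ F \ Γ` exists, and let `v` be a vertex that can be added to `Γ`. Maximality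
puts `v` in `A`, and keeps every common neighbour `q` of `A` outside `K'` within `Γ`, as otherwise
`A + q - v` would be good and avoid `Γ + v`. By rigidity of `Γ` these common neighbours are
monochromatic in every `(a + 1)`-colouring of `G - A`, a contradiction (`even_core`).
-/

open SimpleGraph

namespace Tihany

variable {V : Type*}

/-! ### Colourings off a set and exchange of clique vertices -/

/-- `f` restricts to a proper `k`-colouring of `G - A`. The colouring is encoded as a total function
on `V`, whose values on `A` are irrelevant. -/
def ProperOff (G : SimpleGraph V) (A : Finset V) {k : ℕ} (f : V → Fin k) : Prop :=
  ∀ u v, u ∉ A → v ∉ A → G.Adj u v → f u ≠ f v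

/-- `q` is a common neighbour of the vertices of `A`; in particular `q ∉ A`. -/
def Common (G : SimpleGraph V) (A : Finset V) (q : V) : Prop := ∀ x ∈ A, G.Adj q x

lemma Common.notMem {G : SimpleGraph V} {A : Finset V} {q : V} (h : Common G A q) : q ∉ A :=
  fun hq => G.loopless.irrefl q (h q hq)

/-- With `N + 1 = |A| + k` and `G` not `N`-colourable, every colour of a proper `k`-colouring of
`G - A` occurs on a common neighbour of `A`: if colour `i` does not, each vertex of that class can
take over the private colour of some vertex of `A` that it is not adjacent to. -/
lemma rainbow {G : SimpleGraph V} {N k : ℕ} (hn : ¬ G.Colorable N) {A : Finset V}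
    {f : V → Fin k} (hf : ProperOff G A f) (hk : A.card + k = N + 1) (i : Fin k) :
    ∃ q, Common G A q ∧ f q = i := by
  classical
  by_contra hcon
  push Not at hcon
  apply hn
  have hx : ∀ v, f v = i → ∃ x ∈ A, ¬ G.Adj v x := by
    intro v hv
    by_contra h
    push Not at h
    exact hcon v h hv
  choose g hgA hgn using hx
  let C : V → {x // x ∈ A} ⊕ {j : Fin k // j ≠ i} := fun v =>
    if hA : v ∈ A then Sum.inl ⟨v, hA⟩
    else if hv : f v = i then Sum.inl ⟨g v hv, hgA v hv⟩ else Sum.inr ⟨f v, hv⟩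
  have hC : ∀ {u v}, G.Adj u v → C u ≠ C v := by
    intro u v huv
    by_cases hu : u ∈ A <;> by_cases hv : v ∈ A
    · simp [C, hu, hv, huv.ne]
    · by_cases h : f v = i
      · simp only [C, hu, hv, h, dif_pos, dif_neg, not_false_eq_true]
        intro e
        have : u = g v h := by simpa using e
        exact hgn v h (this ▸ huv.symm)
      · simp [C, hu, hv, h]
    · by_cases h : f u = i
      · simp only [C, hu, hv, h, dif_pos, dif_neg, not_false_eq_true]
        intro e
        have : g u h = v := by simpa using e
        exact hgn u h (this ▸ huv)
      · simp [C, hu, hv, h]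
    · have := hf u v hu hv huv
      by_cases h : f u = i <;> by_cases h' : f v = i
      · exact absurd (h.trans h'.symm) this
      · simp [C, hu, hv, h, h']
      · simp [C, hu, hv, h, h']
      · simp [C, hu, hv, h, h', this]
  have := (SimpleGraph.Coloring.mk C hC).colorable
  have hcard : Fintype.card ({x // x ∈ A} ⊕ {j : Fin k // j ≠ i}) = N := by
    rw [Fintype.card_sum, Fintype.card_coe, Fintype.card_subtype_compl]
    simp
    have := i.pos
    omega
  rwa [hcard] at this

/-- Giving `v` a new colour extends a colouring of `G - A` to `G - (A \ {v})`. -/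
lemma ProperOff.erase {G : SimpleGraph V} [DecidableEq V] {A : Finset V} {k : ℕ} {f : V → Fin k}
    (hf : ProperOff G A f) (v : V) : ∃ g : V → Fin (k + 1), ProperOff G (A.erase v) g := by
  refine ⟨fun u => if u = v then Fin.last k else (f u).castSucc, ?_⟩
  intro x y hx hy hxy
  have hne := hxy.ne
  by_cases h1 : x = v <;> by_cases h2 : y = v
  · exact absurd (h1.trans h2.symm) hne
  · simpa only [h1, h2, if_true, if_false] using (Fin.castSucc_lt_last (f y)).ne'
  · simpa only [h1, h2, if_true, if_false] using (Fin.castSucc_lt_last (f x)).ne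
  · simp only [h1, h2, if_false]
    intro e
    refine hf x y ?_ ?_ hxy (Fin.castSucc_injective _ e)
    · simpa [h1] using hx
    · simpa [h2] using hy

/-- A clique disjoint from `A` uses pairwise distinct colours. -/
lemma ProperOff.injOn {G : SimpleGraph V} {A : Finset V} {k : ℕ} {f : V → Fin k}
    (hf : ProperOff G A f) {K : Finset V} (hK : G.IsClique (K : Set V)) (hd : Disjoint K A) :
    Set.InjOn f (K : Set V) := by
  intro x hx y hy hxy
  by_contra hne
  exact hf x y (Finset.disjoint_left.1 hd hx) (Finset.disjoint_left.1 hd hy) (hK hx hy hne) hxy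

lemma clique_insert [DecidableEq V] {G : SimpleGraph V} {A : Finset V} {m : ℕ}
    (hA : G.IsNClique m A) {q : V} (hq : Common G A q) : G.IsNClique (m + 1) (insert q A) :=
  hA.insert hq

lemma clique_erase [DecidableEq V] {G : SimpleGraph V} {A : Finset V} {m : ℕ}
    (hA : G.IsNClique (m + 1) A) {q : V} (hq : q ∈ A) : G.IsNClique m (A.erase q) := by
  refine ⟨hA.isClique.subset (by simp), ?_⟩
  rw [Finset.card_erase_of_mem hq, hA.card_eq]; rfl

lemma clique_union [DecidableEq V] {G : SimpleGraph V} {A B : Finset V} {m l : ℕ}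
    (hA : G.IsNClique m A) (hB : G.IsNClique l B) (h : ∀ b ∈ B, Common G A b) :
    G.IsNClique (m + l) (A ∪ B) := by
  have hd : Disjoint A B := Finset.disjoint_right.2 fun b hb => (h b hb).notMem
  refine ⟨?_, by rw [Finset.card_union_of_disjoint hd, hA.card_eq, hB.card_eq]⟩
  intro x hx y hy hne
  simp only [Finset.coe_union, Set.mem_union, Finset.mem_coe] at hx hy
  rcases hx with hx | hx <;> rcases hy with hy | hy
  · exact hA.isClique hx hy hne
  · exact (h y hy x hx).symm
  · exact h x hx y hy
  · exact hB.isClique hx hy hne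

/-- By `rainbow`, `A` has at least `k` common neighbours, hence one outside any set `B` that has
fewer than `k` elements off `A`. -/
lemma exists_common_notMem [DecidableEq V] {G : SimpleGraph V} {N k : ℕ} (hn : ¬ G.Colorable N) {A : Finset V}
    {f : V → Fin k} (hf : ProperOff G A f) (hk : A.card + k = N + 1) {B : Finset V}
    (hB : (B \ A).card < k) : ∃ q, Common G A q ∧ q ∉ B := by
  choose q hq hqi using rainbow hn hf hk
  by_contra hcon
  push Not at hcon
  have : Function.Injective q := fun i j h => by rw [← hqi i, ← hqi j, h]
  have h2 := Finset.card_le_card_of_injOn (s := (Finset.univ : Finset (Fin k)))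
    (t := B \ A) q
    (fun i _ => by simpa using ⟨hcon _ (hq i), (hq i).notMem⟩) this.injOn
  simp at h2
  omega

/-- An `s`-clique `L` meeting `K` in `v` can be moved off `v`: `L - v` has at least `t > |K|` common
neighbours, and one outside `K` replaces `v`. -/
lemma exists_disjoint_clique {G : SimpleGraph V} {s t : ℕ} (hs : 1 ≤ s)
    (hn : ¬ G.Colorable (s + t - 2)) (ht : 1 ≤ t)
    (hS : ∀ K, G.IsNClique s K → ∃ f : V → Fin (t - 1), ProperOff G K f)
    (K : Finset V) (hK : K.card < t) (hex : ∃ L, G.IsNClique s L) :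
    ∃ L, G.IsNClique s L ∧ Disjoint L K := by
  classical
  suffices H : ∀ m, ∀ L, G.IsNClique s L → (L ∩ K).card = m →
      ∃ L, G.IsNClique s L ∧ Disjoint L K by
    obtain ⟨L, hL⟩ := hex
    exact H _ L hL rfl
  intro m
  induction m with
  | zero =>
    intro L hL h
    exact ⟨L, hL, Finset.disjoint_iff_inter_eq_empty.2 (Finset.card_eq_zero.1 h)⟩
  | succ m ih =>
    intro L hL h
    obtain ⟨v, hv⟩ := Finset.card_pos.1 (show 0 < (L ∩ K).card by omega)
    obtain ⟨hvL, hvK⟩ := Finset.mem_inter.1 hv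
    obtain ⟨f, hf⟩ := hS L hL
    obtain ⟨g, hg⟩ := hf.erase v
    obtain ⟨r, rfl⟩ : ∃ r, s = r + 1 := ⟨s - 1, by omega⟩
    have hLv := clique_erase hL hvL
    obtain ⟨q, hq, hqK⟩ := exists_common_notMem (B := K) hn hg (by rw [hLv.card_eq]; omega)
      (by have := Finset.card_le_card (Finset.sdiff_subset (s := K) (t := L.erase v)); omega)
    refine ih _ (clique_insert hLv hq) ?_
    rw [Finset.insert_inter_of_notMem hqK, Finset.erase_inter, Finset.card_erase_of_mem hv, h]
    rfl


lemma not_disjoint_cliques {G : SimpleGraph V} {s t : ℕ} (ht : 1 ≤ t)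
    (hS : ∀ K, G.IsNClique s K → ∃ f : V → Fin (t - 1), ProperOff G K f)
    {K L : Finset V} (hK : G.IsNClique s K) (hL : G.IsNClique t L) : ¬ Disjoint L K := by
  intro hd
  obtain ⟨f, hf⟩ := hS K hK
  have h := Finset.card_le_card_of_injOn (s := L) (t := Finset.univ) f (fun _ _ => by simp)
    (hf.injOn hL.isClique hd)
  rw [hL.card_eq, Finset.card_univ, Fintype.card_fin] at h
  omega

/-- There is no clique `M` with one vertex fewer than `χ(G) = s + t - 1`. Otherwise split `M` into
an `(s - 1)`-clique and a `(t - 1)`-clique, and extend them by two distinct vertices outside `M`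
to a disjoint pair of an `s`-clique and a `t`-clique. -/
lemma not_clique_pred {G : SimpleGraph V} {s t : ℕ} (hs : 2 ≤ s) (ht : 2 ≤ t)
    (hn : ¬ G.Colorable (s + t - 2))
    (hω : ∀ m K, G.IsNClique m K → m < s + t - 1)
    (hS : ∀ K, G.IsNClique s K → ∃ f : V → Fin (t - 1), ProperOff G K f)
    (hT : ∀ K, G.IsNClique t K → ∃ f : V → Fin (s - 1), ProperOff G K f)
    (M : Finset V) : ¬ G.IsNClique (s + t - 2) M := by
  classical
  intro hM
  have hsub : ∀ A, A ⊆ M → G.IsNClique A.card A := fun A hA =>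
    ⟨hM.isClique.subset (by exact_mod_cast hA), rfl⟩
  obtain ⟨T, hTM, hTc⟩ := Finset.exists_subset_card_eq (s := M) (n := t)
    (by rw [hM.card_eq]; omega)
  have hMT : (M \ T).card = s - 2 := by
    rw [Finset.card_sdiff_of_subset hTM, hM.card_eq, hTc]; omega
  have hTcl : G.IsNClique t T := hTc ▸ hsub T hTM
  obtain ⟨f, hf⟩ := hT T hTcl
  obtain ⟨b, hb, hbM⟩ := exists_common_notMem (B := M) hn hf (by omega) (by omega)
  obtain ⟨y, hyM, hby⟩ : ∃ y ∈ M, ¬ G.Adj b y := by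
    by_contra hcon
    push Not at hcon
    have := hω _ _ (clique_insert hM hcon)
    omega
  have hyT : y ∉ T := fun h => hby (hb y h)
  obtain ⟨x, hx⟩ := Finset.card_pos.1 (show 0 < T.card by omega)
  have hxMT : x ∉ M \ T := by simp [hx]
  have hS0M : insert x (M \ T) ⊆ M :=
    Finset.insert_subset (hTM hx) Finset.sdiff_subset
  have hS0c : (insert x (M \ T)).card = s - 1 := by
    rw [Finset.card_insert_of_notMem hxMT, hMT]; omega
  -- `S` contains `y`, so a common neighbour of `S` differs from `b`.
  obtain ⟨S, hS0S, hSM, hSc⟩ := Finset.exists_subsuperset_card_eq (n := s) hS0M (by omega)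
    (by rw [hM.card_eq]; omega)
  have hScl : G.IsNClique s S := hSc ▸ hsub S hSM
  obtain ⟨g, hg⟩ := hS S hScl
  obtain ⟨d, hd, hdM⟩ := exists_common_notMem (B := M) hn hg (by omega) (by
    rw [Finset.card_sdiff_of_subset hSM, hM.card_eq, hSc]; omega)
  have hdb : d ≠ b := by
    rintro rfl
    exact hby (hd y (hS0S (by simp [hyM, hyT])))
  have h1 : G.IsNClique s (insert d (insert x (M \ T))) := by
    have := clique_insert (hsub _ hS0M) (q := d) (fun z hz => hd z (hS0S hz))
    rwa [hS0c, Nat.sub_add_cancel (by omega)] at this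
  have h2 : G.IsNClique t (insert b (T.erase x)) := by
    obtain ⟨r, rfl⟩ : ∃ r, t = r + 1 := ⟨t - 1, by omega⟩
    exact clique_insert (clique_erase hTcl hx) fun z hz => hb z (Finset.mem_of_mem_erase hz)
  refine not_disjoint_cliques (by omega) hS h1 h2 ?_
  rw [Finset.disjoint_left]
  intro z hz hz'
  simp only [Finset.mem_insert, Finset.mem_erase, Finset.mem_sdiff] at hz hz'
  rcases hz with rfl | ⟨hzx, hzT⟩
  · rcases hz' with h | rfl | h
    · exact hdb h.symm
    · exact hbM (hTM hx)
    · exact hbM h.1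
  · rcases hz' with rfl | h | h
    · exact hdM (hTM hzT)
    · exact hzx h
    · exact h.2 hzT

/-! ### The case `t = s + 1` -/

/-- The case `t = s + 1`: two disjoint `s`-cliques span a clique of size `χ(G) = 2s`. -/
lemma odd_case {G : SimpleGraph V} {s : ℕ} (hs : 2 ≤ s)
    (hn : ¬ G.Colorable (s + (s + 1) - 2))
    (hω : ∀ m K, G.IsNClique m K → m < s + (s + 1) - 1)
    (hS : ∀ K, G.IsNClique s K → ∃ f : V → Fin (s + 1 - 1), ProperOff G K f)
    (hex : ∃ L, G.IsNClique s L) : False := by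
  classical
  obtain ⟨K, hK⟩ := hex
  obtain ⟨L, hL, hd⟩ := exists_disjoint_clique (by omega) hn (by omega) hS K
    (by rw [hK.card_eq]; omega) ⟨K, hK⟩
  have hsub : ∀ q, Common G K q → q ∈ L := by
    intro q hq
    by_contra hqL
    refine not_disjoint_cliques (by omega) hS hL (clique_insert hK hq) ?_
    rw [Finset.disjoint_insert_left]
    exact ⟨hqL, hd.symm⟩
  obtain ⟨f, hf⟩ := hS K hK
  have hall : ∀ b ∈ L, Common G K b := by
    intro b hb
    by_contra hbc
    obtain ⟨q, hq, hqL⟩ := exists_common_notMem (B := L.erase b) hn hf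
      (by rw [hK.card_eq]; omega) (by
        have := Finset.card_le_card (Finset.sdiff_subset (s := L.erase b) (t := K))
        rw [Finset.card_erase_of_mem hb, hL.card_eq] at this
        omega)
    refine hqL (Finset.mem_erase.2 ⟨?_, hsub q hq⟩)
    rintro rfl
    exact hbc hq
  have := hω _ _ (clique_union hK hL hall)
  omega

/-! ### Forced vertices and rigid sets -/

/-- The least set that contains `K` and every vertex `v ∉ L` which, for each colour `i ≠ κ v`, has
a neighbour `w i` of colour `i` in the set. -/
inductive Forced (G : SimpleGraph V) {c : ℕ} (κ : V → Fin c) (K L : Finset V) : V → Prop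
  | base (v : V) : v ∈ K → Forced G κ K L v
  | step (v : V) (w : Fin c → V) : v ∉ L → (∀ i, i ≠ κ v → Forced G κ K L (w i)) →
      (∀ i, i ≠ κ v → κ (w i) = i ∧ G.Adj v (w i)) → Forced G κ K L v

/-- Every proper colouring of `G[Γ]` with `c` colours agrees with `κ` on `Γ` up to a permutation `σ`
of the colours. -/
def Rigid (G : SimpleGraph V) {c : ℕ} (κ : V → Fin c) (Γ : Finset V) : Prop :=
  ∀ ψ : V → Fin c, (∀ u ∈ Γ, ∀ v ∈ Γ, G.Adj u v → ψ u ≠ ψ v) →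
    ∃ σ : Fin c → Fin c, Function.Injective σ ∧ ∀ v ∈ Γ, ψ v = σ (κ v)

lemma Forced.notMem {G : SimpleGraph V} {c : ℕ} {κ : V → Fin c} {K K' : Finset V}
    (hd : Disjoint K K') {v : V} (h : Forced G κ K K' v) : v ∉ K' := by
  cases h with
  | base _ hv => exact Finset.disjoint_left.1 hd hv
  | step _ _ hv _ _ => exact hv

/-- Rigidity is preserved when `v` sees every colour but its own in `Γ`: the colour `σ (κ v)` is the
only one left for `v`. -/
lemma Rigid.insert [DecidableEq V] {G : SimpleGraph V} {c : ℕ} {κ : V → Fin c} {Γ : Finset V}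
    (hΓ : Rigid G κ Γ) {v : V} {w : Fin c → V} (hw : ∀ i, i ≠ κ v → w i ∈ Γ)
    (hv : ∀ i, i ≠ κ v → κ (w i) = i ∧ G.Adj v (w i)) : Rigid G κ (insert v Γ) := by
  intro ψ hψ
  obtain ⟨σ, hσ, hσΓ⟩ := hΓ ψ fun x hx y hy => hψ x (by simp [hx]) y (by simp [hy])
  refine ⟨σ, hσ, ?_⟩
  intro x hx
  rcases Finset.mem_insert.1 hx with rfl | hx
  · obtain ⟨j, hj⟩ := (Finite.injective_iff_surjective.1 hσ) (ψ x)
    by_cases hjx : j = κ x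
    · rw [← hj, hjx]
    · obtain ⟨h1, h2⟩ := hv j hjx
      refine absurd ?_ (hψ x (by simp) (w j) (by simp [hw j hjx]) h2)
      rw [hσΓ _ (hw j hjx), h1, hj]
  · exact hσΓ x hx

lemma surj_of_clique {G : SimpleGraph V} {c : ℕ} {κ : V → Fin c} {K K' : Finset V}
    (hκ : ProperOff G K' κ) (hK : G.IsNClique c K) (hd : Disjoint K K') (i : Fin c) :
    ∃ u ∈ K, κ u = i := by
  have := Finset.surj_on_of_inj_on_of_card_le (s := K) (t := Finset.univ) (fun v _ => κ v)
    (fun _ _ => by simp) (fun x y hx hy h => hκ.injOn hK.isClique hd hx hy h)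
    (by simp [hK.card_eq]) i (by simp)
  obtain ⟨u, hu, h⟩ := this
  exact ⟨u, hu, h.symm⟩

lemma rigid_clique {G : SimpleGraph V} {c : ℕ} {κ : V → Fin c} {K K' : Finset V}
    (hκ : ProperOff G K' κ) (hK : G.IsNClique c K) (hd : Disjoint K K') : Rigid G κ K := by
  intro ψ hψ
  choose u huK hu using surj_of_clique hκ hK hd
  refine ⟨fun i => ψ (u i), ?_, ?_⟩
  · intro i j hij
    by_contra hne
    have : u i ≠ u j := fun h => hne (by rw [← hu i, ← hu j, h])
    exact hψ _ (huK i) _ (huK j) (hK.isClique (huK i) (huK j) this) hij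
  · intro v hv
    have : u (κ v) = v := hκ.injOn hK.isClique hd (huK _) hv (hu _)
    simp only [this]

/-! ### The cases `t = s` and `t = s + 2` -/

/-- If the `a`-clique `A` and its common neighbour `q` avoid `K'`, then `A` uses every colour other
than that of `q`. -/
lemma common_colours {G : SimpleGraph V} {a : ℕ} {κ : V → Fin (a + 1)} {A K' : Finset V}
    (hκ : ProperOff G K' κ) (hA : G.IsNClique a A) (hd : Disjoint A K') {q : V}
    (hq : Common G A q) (hqK : q ∉ K') (i : Fin (a + 1)) (hi : i ≠ κ q) :
    ∃ u ∈ A, κ u = i := by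
  classical
  obtain ⟨u, hu, h⟩ := surj_of_clique hκ (clique_insert hA hq)
    (Finset.disjoint_insert_left.2 ⟨hqK, hd⟩) i
  rcases Finset.mem_insert.1 hu with rfl | hu
  · exact absurd h.symm hi
  · exact ⟨u, hu, h⟩

lemma common_same_colour {G : SimpleGraph V} {a : ℕ} {κ : V → Fin (a + 1)} {A K' : Finset V}
    (hκ : ProperOff G K' κ) (hA : G.IsNClique a A) (hd : Disjoint A K') {q r : V}
    (hq : Common G A q) (hqK : q ∉ K') (hr : Common G A r) (hrK : r ∉ K') : κ r = κ q := by
  by_contra hne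
  obtain ⟨u, hu, h⟩ := common_colours hκ hA hd hq hqK _ hne
  exact hκ r u hrK (Finset.disjoint_left.1 hd hu) (hr u hu) h.symm

/-- If all common neighbours of `A` outside `K'` had the same colour `j`, then by `rainbow` the other
`a` colours would occur on common neighbours in `K'`. Hence `K'` would consist of common neighbours
of `A`, and `A ∪ K'` would be a `2a`-clique. -/
lemma not_monochromatic {G : SimpleGraph V} {a : ℕ} (hn : ¬ G.Colorable (2 * a))
    (hE : ∀ M, ¬ G.IsNClique (2 * a) M) {A K' : Finset V} (hA : G.IsNClique a A)
    (hK' : G.IsNClique a K') {ψ : V → Fin (a + 1)} (hψ : ProperOff G A ψ) (j : Fin (a + 1)) :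
    ∃ q, Common G A q ∧ q ∉ K' ∧ ψ q ≠ j := by
  classical
  by_contra hcon
  push Not at hcon
  choose q hq hqi using rainbow hn hψ (by rw [hA.card_eq]; omega)
  have hqK : ∀ i, i ≠ j → q i ∈ K' := by
    intro i hi
    by_contra h
    exact hi ((hqi i).symm.trans (hcon _ (hq i) h))
  have hall : ∀ b ∈ K', Common G A b := by
    intro b hb
    obtain ⟨i, -, hi⟩ := Finset.surj_on_of_inj_on_of_card_le (s := Finset.univ.erase j) (t := K')
      (fun i _ => q i) (fun i hi => hqK i (Finset.ne_of_mem_erase hi))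
      (fun x y _ _ h => by rw [← hqi x, ← hqi y]; exact congrArg ψ h)
      (by simp [hK'.card_eq]) b hb
    exact hi ▸ hq i
  have := clique_union hA hK' hall
  rw [← two_mul] at this
  exact hE _ this

/-- The common core of the cases `t = s` (with `a = s - 1`) and `t = s + 2` (with `a = s`), where
`χ(G) = 2a + 1`. Hypothesis `H` says that every `a`-clique inside an `(a + 1)`-clique is good, that
is, its deletion leaves an `(a + 1)`-colourable graph. -/
lemma even_core [Fintype V] {G : SimpleGraph V} {a : ℕ} (ha : 1 ≤ a)
    (hn : ¬ G.Colorable (2 * a)) (hE : ∀ M, ¬ G.IsNClique (2 * a) M)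
    (H : ∀ B, G.IsNClique (a + 1) B → ∀ A ⊆ B, G.IsNClique a A →
      ∃ f : V → Fin (a + 1), ProperOff G A f)
    {K K' : Finset V} (hK : G.IsNClique (a + 1) K) (hK' : G.IsNClique a K')
    (hd : Disjoint K K') {κ : V → Fin (a + 1)} (hκ : ProperOff G K' κ) : False := by
  classical
  let F := Forced G κ K K'
  have hFd : ∀ A : Finset V, (∀ v ∈ A, F v) → Disjoint A K' := fun A hA =>
    Finset.disjoint_left.2 fun v hv => (hA v hv).notMem hd
  have hFq : ∀ A : Finset V, G.IsNClique a A → (∀ v ∈ A, F v) → ∀ q, Common G A q → q ∉ K' →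
      F q := by
    intro A hA hAF q hq hqK
    have : Nonempty V := ⟨q⟩
    have := common_colours hκ hA (hFd A hAF) hq hqK
    choose! w hwA hw using this
    exact Forced.step q w hqK (fun i hi => hAF _ (hwA i hi))
      (fun i hi => ⟨hw i hi, hq _ (hwA i hi)⟩)
  -- An `(a + 1)`-clique of forced vertices meeting `K` in `y` can be moved off `y`: the common
  -- neighbours of `B - y` outside `K'` are not all equal to `y`, and all of them have colour `κ y`.
  have hstart : ∀ m, ∀ B, G.IsNClique (a + 1) B → (∀ v ∈ B, F v) → (B ∩ K).card = m →
      ∃ B, G.IsNClique (a + 1) B ∧ (∀ v ∈ B, F v) ∧ Disjoint B K := by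
    intro m
    induction m with
    | zero =>
      intro B hB hBF h
      exact ⟨B, hB, hBF, Finset.disjoint_iff_inter_eq_empty.2 (Finset.card_eq_zero.1 h)⟩
    | succ m ih =>
      intro B hB hBF h
      obtain ⟨y, hy⟩ := Finset.card_pos.1 (show 0 < (B ∩ K).card by omega)
      obtain ⟨hyB, hyK⟩ := Finset.mem_inter.1 hy
      have hA := clique_erase hB hyB
      have hAF : ∀ v ∈ B.erase y, F v := fun v hv => hBF v (Finset.mem_of_mem_erase hv)
      have hyc : Common G (B.erase y) y := fun x hx =>
        hB.isClique hyB (Finset.mem_of_mem_erase hx) (Finset.ne_of_mem_erase hx).symm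
      obtain ⟨ψ, hψ⟩ := H B hB _ (Finset.erase_subset _ _) hA
      obtain ⟨z, hz, hzK', hzy⟩ := not_monochromatic hn hE hA hK' hψ (ψ y)
      have hκz : κ z = κ y := common_same_colour hκ hA (hFd _ hAF) hyc
        ((hBF y hyB).notMem hd) hz hzK'
      have hzK : z ∉ K := fun h => hzy (by rw [hκ.injOn hK.isClique hd h hyK hκz])
      refine ih _ (clique_insert hA hz) ?_ ?_
      · intro v hv
        rcases Finset.mem_insert.1 hv with rfl | hv
        · exact hFq _ hA hAF _ hz hzK'
        · exact hAF v hv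
      · rw [Finset.insert_inter_of_notMem hzK, Finset.erase_inter, Finset.card_erase_of_mem hy, h]
        rfl
  -- No good `a`-clique of forced vertices avoids a rigid set `Γ` with `K ⊆ Γ ⊆ F`; the induction is
  -- on the size of the complement of `Γ`.
  have hmain : ∀ m, ∀ Γ : Finset V, Fintype.card V - Γ.card = m → K ⊆ Γ → (∀ v ∈ Γ, F v) →
      Rigid G κ Γ → ∀ A, G.IsNClique a A → (∀ v ∈ A, F v) → Disjoint A Γ →
      (∃ f : V → Fin (a + 1), ProperOff G A f) → False := by
    intro m
    induction m using Nat.strong_induction_on with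
    | _ m ih =>
      intro Γ hm hKΓ hΓF hΓ A hA hAF hAΓ ⟨ψ, hψ⟩
      -- `Γ` is not all of `F`, since `A` is nonempty; so some vertex can still be added.
      have hadd : ∃ (v : V) (w : Fin (a + 1) → V), v ∉ Γ ∧ v ∉ K' ∧
          (∀ i, i ≠ κ v → w i ∈ Γ) ∧ (∀ i, i ≠ κ v → κ (w i) = i ∧ G.Adj v (w i)) := by
        by_contra hcon
        push Not at hcon
        have hFΓ : ∀ v, F v → v ∈ Γ := by
          intro v hv
          induction hv with
          | base v hv => exact hKΓ hv
          | step v w hvK _ h2 ih =>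
            by_contra hvΓ
            obtain ⟨i, hi, hi'⟩ := hcon v w hvΓ hvK ih
            exact hi' (h2 i hi).1 (h2 i hi).2
        obtain ⟨x, hx⟩ := Finset.card_pos.1 (show 0 < A.card by rw [hA.card_eq]; omega)
        exact Finset.disjoint_left.1 hAΓ hx (hFΓ x (hAF x hx))
      obtain ⟨v, w, hvΓ, hvK', hwΓ, hw⟩ := hadd
      have hvF : F v := Forced.step v w hvK' (fun i hi => hΓF _ (hwΓ i hi)) hw
      have hlt : Fintype.card V - (insert v Γ).card < m := by
        have := Finset.card_le_univ (insert v Γ)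
        rw [Finset.card_insert_of_notMem hvΓ] at this ⊢
        omega
      have hIH := ih _ hlt (insert v Γ) rfl (hKΓ.trans (Finset.subset_insert _ _))
        (fun x hx => (Finset.mem_insert.1 hx).elim (fun h => h ▸ hvF) (hΓF x)) (hΓ.insert hwΓ hw)
      have hvA : v ∈ A := by
        by_contra hvA
        exact hIH A hA hAF (Finset.disjoint_insert_right.2 ⟨hvA, hAΓ⟩) ⟨ψ, hψ⟩
      have hqΓ : ∀ q, Common G A q → q ∉ K' → q ∈ Γ := by
        intro q hq hqK'
        by_contra hqΓ
        have hqA := hq.notMem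
        have hB := clique_insert hA hq
        have hA' := clique_erase hB (Finset.mem_insert_of_mem hvA)
        refine hIH _ hA' ?_ ?_ (H _ hB _ (Finset.erase_subset _ _) hA')
        · intro x hx
          rcases Finset.mem_insert.1 (Finset.mem_of_mem_erase hx) with rfl | hx
          · exact hFq A hA hAF _ hq hqK'
          · exact hAF x hx
        · rw [Finset.disjoint_insert_right]
          refine ⟨Finset.notMem_erase _ _, ?_⟩
          refine Finset.disjoint_of_subset_left (Finset.erase_subset _ _) ?_
          exact Finset.disjoint_insert_left.2 ⟨hqΓ, hAΓ⟩
      obtain ⟨σ, -, hσ⟩ := hΓ ψ fun x hx y hy hxy =>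
        hψ x y (Finset.disjoint_right.1 hAΓ hx) (Finset.disjoint_right.1 hAΓ hy) hxy
      -- The colour `ψ v` is arbitrary here: only the existence of `q` is used.
      obtain ⟨q, hq, hqK', -⟩ := not_monochromatic hn hE hA hK' hψ (ψ v)
      obtain ⟨r, hr, hrK', hrq⟩ := not_monochromatic hn hE hA hK' hψ (ψ q)
      apply hrq
      rw [hσ r (hqΓ r hr hrK'), hσ q (hqΓ q hq hqK'),
        common_same_colour hκ hA (hFd A hAF) hq hqK' hr hrK']
  obtain ⟨B, hB, hBF, hBK⟩ := hstart _ K hK (fun v hv => Forced.base v hv) rfl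
  obtain ⟨y, hy⟩ := Finset.card_pos.1 (show 0 < B.card by rw [hB.card_eq]; omega)
  have hA := clique_erase hB hy
  exact hmain _ K rfl subset_rfl (fun v hv => Forced.base v hv) (rigid_clique hκ hK hd) _ hA
    (fun v hv => hBF v (Finset.mem_of_mem_erase hv))
    (Finset.disjoint_of_subset_left (Finset.erase_subset _ _) hBK)
    (H B hB _ (Finset.erase_subset _ _) hA)

/-! ### From partitions to cliques -/

lemma properOff_of_colorable {G : SimpleGraph V} {K : Finset V} {k : ℕ} (hk : 1 ≤ k)
    {U : Set V} (hU : ∀ v, v ∉ K → v ∈ U) (h : (G.induce U).Colorable k) :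
    ∃ f : V → Fin k, ProperOff G K f := by
  classical
  obtain ⟨C⟩ := h
  refine ⟨fun v => if hv : v ∈ U then C ⟨v, hv⟩ else ⟨0, hk⟩, ?_⟩
  intro u v hu hv huv
  simp only [hU u hu, hU v hv, dif_pos]
  exact C.valid (by simpa using huv)

lemma le_chromaticNumber_of_clique [Fintype V] {G : SimpleGraph V} {K : Finset V} {m : ℕ}
    (hK : G.IsNClique m K) :
    (m : ℕ∞) ≤ (G.induce (K : Set V)).chromaticNumber := by
  classical
  have : (G.induce (K : Set V)).IsClique ((Finset.univ : Finset (K : Set V)) : Set _) := by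
    intro x _ y _ hne
    exact hK.isClique x.2 y.2 (fun h => hne (Subtype.ext h))
  have h := this.card_le_chromaticNumber
  simpa [hK.card_eq] using h

end Tihany

open Tihany

theorem stmt17 {V : Type*} [Fintype V] (s t : ℕ)
    (hs : 2 ≤ s) (hst : s ≤ t) (hts : t ≤ s + 2)
    (G : SimpleGraph V)
    (hχ : G.chromaticNumber = ((s + t - 1 : ℕ) : ℕ∞))
    (hω : G.cliqueNum < s + t - 1)
    (hKs : ∃ K : Finset V, G.IsNClique s K) :
    ∃ S : Set V, (s : ℕ∞) ≤ (G.induce S).chromaticNumber ∧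
      (t : ℕ∞) ≤ (G.induce Sᶜ).chromaticNumber := by
  classical
  by_contra hcon
  push Not at hcon
  have hcol : ∀ {U : Set V} {k : ℕ}, 1 ≤ k → (G.induce U).chromaticNumber < k →
      (G.induce U).Colorable (k - 1) := by
    intro U k hk h
    obtain ⟨j, rfl⟩ : ∃ j, k = j + 1 := ⟨k - 1, by omega⟩
    rw [Nat.cast_add_one] at h
    exact chromaticNumber_le_iff_colorable.1 (Order.le_of_lt_add_one h)
  have hS : ∀ K, G.IsNClique s K → ∃ f : V → Fin (t - 1), ProperOff G K f := by
    intro K hK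
    exact properOff_of_colorable (by omega) (fun v hv => by simpa using hv)
      (hcol (by omega) (hcon _ (le_chromaticNumber_of_clique hK)))
  have hT : ∀ K, G.IsNClique t K → ∃ f : V → Fin (s - 1), ProperOff G K f := by
    intro K hK
    refine properOff_of_colorable (U := (K : Set V)ᶜ) (by omega) (fun v hv => by simpa using hv)
      (hcol (by omega) ?_)
    by_contra h
    have := hcon _ (not_lt.1 h)
    rw [compl_compl] at this
    exact absurd (le_chromaticNumber_of_clique hK) (not_le.2 this)
  have hn : ¬ G.Colorable (s + t - 2) := by
    intro h
    have := chromaticNumber_le_iff_colorable.2 h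
    rw [hχ, Nat.cast_le] at this
    omega
  have hω' : ∀ m K, G.IsNClique m K → m < s + t - 1 := by
    intro m K hK
    have := hK.isClique.card_le_cliqueNum
    rw [hK.card_eq] at this
    omega
  have hE := not_clique_pred hs (hs.trans hst) hn hω' hS hT
  obtain ⟨K, hK⟩ := hKs
  obtain rfl | rfl | rfl : t = s ∨ t = s + 1 ∨ t = s + 2 := by omega
  · obtain ⟨a, rfl⟩ : ∃ a, t = a + 1 := ⟨t - 1, by omega⟩
    have hN : a + 1 + (a + 1) - 2 = 2 * a := by omega
    have H : ∀ B, G.IsNClique (a + 1) B → ∀ A ⊆ B, G.IsNClique a A →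
        ∃ f : V → Fin (a + 1), ProperOff G A f := by
      intro B hB A hAB hA
      obtain ⟨y, hy⟩ := Finset.card_pos.1 (show 0 < (B \ A).card by
        rw [Finset.card_sdiff_of_subset hAB, hB.card_eq, hA.card_eq]; omega)
      obtain ⟨hyB, hyA⟩ := Finset.mem_sdiff.1 hy
      have : B.erase y = A := by
        refine (Finset.eq_of_subset_of_card_le (fun x hx => Finset.mem_erase.2
          ⟨ne_of_mem_of_not_mem hx hyA, hAB hx⟩) ?_).symm
        rw [(clique_erase hB hyB).card_eq, hA.card_eq]
      obtain ⟨f, hf⟩ := hS B hB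
      exact this ▸ hf.erase y
    -- `K` itself is too large for `exists_disjoint_clique`, so one vertex `x` of `K` is spared; the
    -- `s`-clique `L` then meets `K` at most in `x`, and loses one vertex anyway.
    obtain ⟨x, hx⟩ := Finset.card_pos.1 (show 0 < K.card by rw [hK.card_eq]; omega)
    obtain ⟨L, hL, hLK⟩ := exists_disjoint_clique (by omega) hn (by omega) hS (K.erase x)
      (by rw [(clique_erase hK hx).card_eq]; omega) ⟨K, hK⟩
    obtain ⟨y, hyL, hy⟩ : ∃ y ∈ L, Disjoint K (L.erase y) := by
      have key : ∀ z, z ∈ K → z ∈ L → z = x := by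
        intro z hz hzL
        by_contra h
        exact Finset.disjoint_left.1 hLK hzL (Finset.mem_erase.2 ⟨h, hz⟩)
      by_cases hxL : x ∈ L
      · refine ⟨x, hxL, Finset.disjoint_left.2 fun z hz hzL => ?_⟩
        exact Finset.ne_of_mem_erase hzL (key z hz (Finset.mem_of_mem_erase hzL))
      · obtain ⟨y, hy⟩ := Finset.card_pos.1 (show 0 < L.card by rw [hL.card_eq]; omega)
        refine ⟨y, hy, Finset.disjoint_left.2 fun z hz hzL => ?_⟩
        have hzL := Finset.mem_of_mem_erase hzL
        exact hxL (key z hz hzL ▸ hzL)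
    have hL' := clique_erase hL hyL
    obtain ⟨κ, hκ⟩ := H L hL _ (Finset.erase_subset _ _) hL'
    rw [hN] at hn hE
    exact even_core (by omega) hn hE H hK hL' hy hκ
  · exact odd_case hs hn hω' hS ⟨K, hK⟩
  · have hN : s + (s + 2) - 2 = 2 * s := by omega
    have H : ∀ B, G.IsNClique (s + 1) B → ∀ A ⊆ B, G.IsNClique s A →
        ∃ f : V → Fin (s + 1), ProperOff G A f := fun B _ A _ hA => hS A hA
    obtain ⟨f, hf⟩ := hS K hK
    obtain ⟨q, hq, -⟩ := rainbow hn hf (by rw [hK.card_eq]; omega) ⟨0, by omega⟩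
    have hB := clique_insert hK hq
    obtain ⟨L, hL, hLB⟩ := exists_disjoint_clique (by omega) hn (by omega) hS _
      (by rw [hB.card_eq]; omega) ⟨K, hK⟩
    obtain ⟨κ, hκ⟩ := hS L hL
    rw [hN] at hn hE
    exact even_core (by omega) hn hE H hB hL hLB.symm hκ
end

section
/- Let s, t be integers with 2 ≤ s ≤ t ≤ 4s − 3, and let G be a claw-free graph with chromatic number χ(G) = s + t − 1 > ω(G) that contains K_s as a subgraph. Then there exists a partition of the vertex set V(G) = S ⊔ T such that χ(G[S]) ≥ s and χ(G[T]) ≥ t. -/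
/-!
Suppose no such partition exists.  Taking an `s`-clique `K` as one part shows that `G - K` is
`(t - 1)`-colourable for every `s`-clique `K`.  Since `G` is not `(s + t - 2)`-colourable, every
colour class of `G - K` contains a common neighbour of `K` (`Bad.hit`).  So the common neighbourhood
of `K` has at least `t - 1` vertices, and it is not a clique because `ω(G) ≤ s + t - 2`.

With claw-freeness, an exchange argument now extends every clique of at most `s` vertices through a
vertex `z` of an `s`-clique to an `s`-clique (`Bad.extend`).  Consequently a neighbour `x` of `z` with
at least one non-neighbour in `N(z)` has at least `s` of them (`Bad.le_card_nonNbrs`).  Moreover, `z`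
can be chosen so that some `s`-clique avoids its closed neighbourhood (`Bad.exists_vertex`), whence
this neighbourhood is `(t - 1)`-colourable.

Let `Γ` be the complement of `G` on `N(z)`, let `D` be the set of its non-isolated vertices and put
`g = |N(z)| - (s + t - 2)`.  The graph `Γ` is triangle-free, as `G` has no claw at `z`; its non-isolated
vertices have degree at least `s`.  Independent sets of `Γ` of at most `s - 1` vertices have at most `g`
neighbours, because they extend to `s`-cliques of `G`, and no `g` vertices cover all edges of `Γ`,
because `ω(G) ≤ s + t - 2`.  Colour classes have at most two vertices in `N(z)`, which gives
`|D| ≥ 2g + 2s` and, using `t ≤ 4s - 3`, also `g ≤ 3s - 5`.  Building an independent set of `s - 1`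
vertices greedily, its neighbourhood outgrows `g` (`no_slow_expansion`), a contradiction.
-/

open SimpleGraph

/-! ### Expansion in triangle-free graphs -/

/-- There is no triangle-free graph `Γ` in which non-isolated vertices have degree at least `s`, at
least `2g + 2s` vertices are non-isolated, independent sets of at most `s - 1` non-isolated vertices
have at most `g ≤ 3s - 5` neighbours, and no `g` vertices cover all edges.

An independent set `L` can always be enlarged by an end of an edge avoiding `N(L)`, and `|N(L)|` then
grows by at least one.  Starting with a vertex of maximum degree `Δ` this yields `Δ ≤ 2s - 3`.  The
second vertex is the better end of an edge avoiding the first neighbourhood; the two ends have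
disjoint neighbourhoods, so `2|N(L)| ≥ 3s` afterwards.  From then on a suitable vertex always gains at
least two new neighbours: otherwise counting edges between `N(L)` and the rest contradicts
`Δ ≤ 2s - 3`.  After `s - 1` steps `|N(L)|` exceeds `3s - 5`. -/
theorem no_slow_expansion {V : Type*} [Fintype V] (Γ : SimpleGraph V) (s g : ℕ)
    (htri : ∀ a b c, Γ.Adj a b → Γ.Adj a c → ¬ Γ.Adj b c)
    (hdeg : ∀ a b, Γ.Adj a b → ∀ N : Finset V, (∀ w, w ∈ N ↔ Γ.Adj a w) → s ≤ N.card)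
    (D : Finset V) (hD : ∀ v, v ∈ D ↔ ∃ w, Γ.Adj v w)
    (hDcard : 2 * g + 2 * s ≤ D.card)
    (hexp : ∀ L X : Finset V, L ⊆ D → (∀ a ∈ L, ∀ b ∈ L, ¬ Γ.Adj a b) → L.card + 1 ≤ s →
      (∀ w, w ∈ X ↔ ∃ a ∈ L, Γ.Adj a w) → X.card ≤ g)
    (hcov : ∀ X : Finset V, X.card ≤ g → ∃ a b, Γ.Adj a b ∧ a ∉ X ∧ b ∉ X)
    (hg : g + 5 ≤ 3 * s) : False := by
  classical
  let nb : V → Finset V := fun v => Finset.univ.filter (Γ.Adj v)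
  have hnb : ∀ v w, w ∈ nb v ↔ Γ.Adj v w := fun v w => by simp [nb]
  let N : Finset V → Finset V := fun L => L.biUnion nb
  have hN : ∀ L w, w ∈ N L ↔ ∃ a ∈ L, Γ.Adj a w := fun L w => by simp [N, hnb]
  have hdeg' : ∀ a b, Γ.Adj a b → s ≤ (nb a).card := fun a b h => hdeg a b h _ (hnb a)
  let ok : Finset V → Prop := fun L => L ⊆ D ∧ ∀ a ∈ L, ∀ b ∈ L, ¬ Γ.Adj a b
  have hok : ∀ L, ok L → L.card + 1 ≤ s → (N L).card ≤ g := fun L h hc =>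
    hexp L (N L) h.1 h.2 hc (hN L)
  have grow : ∀ L a, ok L → a ∈ D → a ∉ N L → ok (insert a L) ∧
      (N (insert a L)).card = (N L).card + (nb a \ N L).card := by
    intro L a hL ha haN
    refine ⟨⟨Finset.insert_subset ha hL.1, ?_⟩, ?_⟩
    · have h1 : ∀ b ∈ L, ¬ Γ.Adj b a := fun b hb hba => haN ((hN _ _).2 ⟨b, hb, hba⟩)
      intro x hx y hy
      rcases Finset.mem_insert.1 hx with hx | hx <;> rcases Finset.mem_insert.1 hy with hy | hy
      · rw [hx, hy]
        exact Γ.irrefl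
      · rw [hx]
        exact fun h => h1 y hy h.symm
      · rw [hy]
        exact h1 x hx
      · exact hL.2 x hx y hy
    · have : N (insert a L) = N L ∪ (nb a \ N L) := by
        simp only [N, Finset.biUnion_insert]
        rw [Finset.union_sdiff_self_eq_union, Finset.union_comm]
      rw [this, Finset.card_union_of_disjoint Finset.disjoint_sdiff]
  -- `L` extends by `k` further vertices, each adding at least one new neighbour.
  have iter : ∀ k L, ok L → L.card + k + 1 ≤ s → (N L).card + k ≤ g := by
    intro k
    induction k with
    | zero => intro L hL hc; exact hok L hL hc
    | succ k ih =>
      intro L hL hc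
      obtain ⟨a, b, hab, ha, hb⟩ := hcov (N L) (hok L hL (by omega))
      obtain ⟨h1, h2⟩ := grow L a hL ((hD a).2 ⟨b, hab⟩) ha
      have h3 := ih _ h1 (by have := Finset.card_insert_le a L; omega)
      have h4 : 0 < (nb a \ N L).card :=
        Finset.card_pos.2 ⟨b, Finset.mem_sdiff.2 ⟨(hnb a b).2 hab, hb⟩⟩
      omega
  obtain ⟨y0, y0', hy0, -⟩ := hcov ∅ (by simp)
  have hDne : D.Nonempty := ⟨y0, (hD _).2 ⟨_, hy0⟩⟩
  obtain ⟨y, hyD, hymax⟩ := Finset.exists_max_image D (fun v => (nb v).card) hDne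
  obtain ⟨y', hyy'⟩ := (hD y).1 hyD
  have hokE : ok ∅ := ⟨by simp, by simp⟩
  have hNE : N ∅ = ∅ := by simp [N]
  obtain ⟨hy1, hy2⟩ := grow ∅ y hokE hyD (by simp [hNE])
  have hyc : (insert y (∅ : Finset V)).card = 1 := by simp
  simp only [hNE, Finset.sdiff_empty, Finset.card_empty, zero_add] at hy2
  have hs1 := hdeg' _ _ hyy'
  have hs3 : 3 ≤ s := by
    have := hok _ hy1 (by omega)
    omega
  have hΔ : (nb y).card + 3 ≤ 2 * s := by
    have := iter (s - 2) _ hy1 (by omega)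
    omega
  have hΔ' : ∀ a b, Γ.Adj a b → (nb a).card + 3 ≤ 2 * s := fun a b h =>
    (Nat.add_le_add_right (hymax a ((hD a).2 ⟨b, h⟩)) 3).trans hΔ
  have key : ∀ i, 2 ≤ i → i + 1 ≤ s →
      ∃ L, ok L ∧ L.card ≤ i ∧ 3 * s + 4 * i ≤ 2 * (N L).card + 8 := by
    intro i hi
    induction i, hi using Nat.le_induction with
    | base =>
      intro _
      obtain ⟨a, b, hab, ha, hb⟩ := hcov _ (hok _ hy1 (by omega))
      obtain ⟨ha1, ha2⟩ := grow _ a hy1 ((hD a).2 ⟨b, hab⟩) ha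
      obtain ⟨hb1, hb2⟩ := grow _ b hy1 ((hD b).2 ⟨a, hab.symm⟩) hb
      have hda := hdeg' _ _ hab
      have hdb := hdeg' _ _ hab.symm
      have hdis : Disjoint (nb a) (nb b) := Finset.disjoint_left.2 fun w hwa hwb =>
        htri w a b ((hnb _ _).1 hwa).symm ((hnb _ _).1 hwb).symm hab
      have h1 : (nb a ∪ nb b).card ≤ (N (insert y ∅)).card +
          ((nb a \ N (insert y ∅)) ∪ (nb b \ N (insert y ∅))).card := by
        rw [← Finset.union_sdiff_distrib]
        have := Finset.card_le_card_sdiff_add_card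
          (s := nb a ∪ nb b) (t := N (insert y ∅))
        omega
      rw [Finset.card_union_of_disjoint hdis] at h1
      have h2 := Finset.card_union_le (nb a \ N (insert y ∅)) (nb b \ N (insert y ∅))
      have h3 := Finset.card_insert_le a (insert y (∅ : Finset V))
      have h4 := Finset.card_insert_le b (insert y (∅ : Finset V))
      by_cases hcmp : (nb b \ N (insert y ∅)).card ≤ (nb a \ N (insert y ∅)).card
      · exact ⟨_, ha1, by omega, by omega⟩
      · exact ⟨_, hb1, by omega, by omega⟩
    | succ i hi ih =>
      intro his
      obtain ⟨L, hL, hLc, hx⟩ := ih (by omega)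
      have hit := iter (s - 1 - i) L hL (by omega)
      have h2i : 2 * i ≤ s := by omega
      suffices ∃ a ∈ D, a ∉ N L ∧ 2 ≤ (nb a \ N L).card by
        obtain ⟨a, haD, haN, h2⟩ := this
        obtain ⟨h3, h4⟩ := grow L a hL haD haN
        exact ⟨_, h3, (Finset.card_insert_le a L).trans (by omega), by omega⟩
      by_contra hcon
      push Not at hcon
      -- Double count the edges between `N L` and `B`: every vertex of `B` sends at least `s - 1`
      -- edges to `N L`, and each vertex of `N L` receives at most `2 * s - 4`, one of its at most
      -- `2 * s - 3` neighbours lying in `L`.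
      let B := D \ (N L ∪ L)
      have hBc : D.card ≤ B.card + (N L).card + L.card := by
        have h1 := Finset.card_le_card_sdiff_add_card (s := D) (t := N L ∪ L)
        have h2 := Finset.card_union_le (N L) L
        simp only [B]
        omega
      have hcount := Finset.sum_card_bipartiteAbove_eq_sum_card_bipartiteBelow
        (s := B) (t := N L) (fun a b => Γ.Adj a b)
      have hlow : B.card * (s - 1) ≤
          ∑ a ∈ B, (Finset.bipartiteAbove (fun a b => Γ.Adj a b) (N L) a).card := by
        rw [← smul_eq_mul]
        refine Finset.card_nsmul_le_sum _ _ _ fun a ha => ?_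
        simp only [B, Finset.mem_sdiff, Finset.mem_union, not_or] at ha
        obtain ⟨w, hw⟩ := (hD a).1 ha.1
        have h1 := hdeg' a w hw
        have h2 := hcon a ha.1 ha.2.1
        have h3 := Finset.card_sdiff_add_card_inter (nb a) (N L)
        have h4 : nb a ∩ N L = Finset.bipartiteAbove (fun a b => Γ.Adj a b) (N L) a := by
          ext w
          simp [Finset.mem_bipartiteAbove, hnb, and_comm]
        rw [← h4]
        omega
      have hup : ∑ c ∈ N L, (Finset.bipartiteBelow (fun a b => Γ.Adj a b) B c).card ≤
          (N L).card * (2 * s - 4) := by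
        rw [← smul_eq_mul]
        refine Finset.sum_le_card_nsmul _ _ _ fun c hc => ?_
        obtain ⟨l, hl, hlc⟩ := (hN _ _).1 hc
        have h1 := hΔ' c l hlc.symm
        have h2 : Finset.bipartiteBelow (fun a b => Γ.Adj a b) B c ⊆ (nb c).erase l := by
          intro w hw
          simp only [Finset.mem_bipartiteBelow, B, Finset.mem_sdiff, Finset.mem_union,
            not_or] at hw
          refine Finset.mem_erase.2 ⟨?_, (hnb _ _).2 hw.2.symm⟩
          rintro rfl
          exact hw.1.2.2 hl
        have h3 := Finset.card_le_card h2
        rw [Finset.card_erase_of_mem ((hnb _ _).2 hlc.symm)] at h3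
        omega
      -- The remaining contradiction is numerical, using `s ≥ 3`, `|N L| ≤ 2s - 4 + i` and `2i ≤ s`.
      have hfin : B.card * (s - 1) ≤ (N L).card * (2 * s - 4) := by omega
      generalize B.card = β at *
      generalize (N L).card = x at *
      obtain ⟨r, rfl⟩ : ∃ r, s = r + 3 := ⟨s - 3, by omega⟩
      have e1 : r + 3 - 1 = r + 2 := by omega
      have e2 : 2 * (r + 3) - 4 = 2 * r + 2 := by omega
      rw [e1, e2] at hfin
      have hβ : x + 4 * r + 10 ≤ β + 3 * i := by omega
      have hxi : x ≤ 2 * r + 2 + i := by omega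
      have hir : 2 * i ≤ r + 3 := by omega
      zify at *
      nlinarith [mul_le_mul_of_nonneg_right hβ (by positivity : (0:ℤ) ≤ (r:ℤ) + 2),
        mul_le_mul_of_nonneg_right hxi (by positivity : (0:ℤ) ≤ (r:ℤ)),
        mul_le_mul_of_nonneg_right hir (by positivity : (0:ℤ) ≤ 2 * (r:ℤ) + 3)]
  obtain ⟨L, hL, hLc, hx⟩ := key (s - 1) (by omega) (by omega)
  have := hok L hL (by omega)
  omega

/-! ### Cliques in a graph without the required partition -/

/-- A graph violating the conclusion, reduced to the consequences of the assumptions that the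
argument uses.  The field `good` says that deleting any `s`-clique leaves a `(t - 1)`-colourable graph; a
colouring of `G - K` is encoded as a function on all of `V` whose values on `K` are irrelevant. -/
structure Bad {V : Type*} (G : SimpleGraph V) (s t : ℕ) : Prop where
  claw : ClawFree G
  hs : 2 ≤ s
  hst : s ≤ t
  hts : t ≤ 4 * s - 3
  nocol : ¬ G.Colorable (s + t - 2)
  clique : ∀ Q : Finset V, G.IsClique (Q : Set V) → Q.card ≤ s + t - 2
  good : ∀ K : Finset V, G.IsNClique s K → ∃ φ : V → ℕ, (∀ v, v ∉ K → φ v < t - 1) ∧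
    ∀ v w, v ∉ K → w ∉ K → G.Adj v w → φ v ≠ φ w

open scoped Classical in
/-- The set of common neighbours of `K`. -/
noncomputable def commonNbrs {V : Type*} [Fintype V] (G : SimpleGraph V) (K : Finset V) :
    Finset V :=
  Finset.univ.filter fun b => ∀ k ∈ K, G.Adj b k

theorem mem_commonNbrs {V : Type*} [Fintype V] {G : SimpleGraph V} {K : Finset V} {b : V} :
    b ∈ commonNbrs G K ↔ ∀ k ∈ K, G.Adj b k := by
  simp [commonNbrs]

theorem not_mem_of_mem_commonNbrs {V : Type*} [Fintype V] {G : SimpleGraph V} {K : Finset V}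
    {b : V} (hb : b ∈ commonNbrs G K) : b ∉ K :=
  fun h => G.irrefl (mem_commonNbrs.1 hb b h)

/-- Among three distinct neighbours of a vertex of a claw-free graph two are adjacent. -/
theorem ClawFree.adj_of_not_adj {V : Type*} {G : SimpleGraph V} (h : ClawFree G) {z a b c : V}
    (ha : G.Adj z a) (hb : G.Adj z b) (hc : G.Adj z c) (hab : a ≠ b) (hac : a ≠ c)
    (nab : ¬ G.Adj a b) (nac : ¬ G.Adj a c) (hbc : b ≠ c) : G.Adj b c := by
  by_contra hcon
  exact h ⟨z, a, b, c, hab, hac, hbc, ha, hb, hc, nab, nac, hcon⟩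

/-- The non-neighbours of `x` among the neighbours of `z` form a clique, by claw-freeness. -/
theorem ClawFree.isClique_nonNbrs {V : Type*} {G : SimpleGraph V} (h : ClawFree G)
    {z x : V} (hzx : G.Adj z x) {J : Finset V}
    (hJ : ∀ w, w ∈ J ↔ G.Adj z w ∧ x ≠ w ∧ ¬ G.Adj x w) : G.IsClique (J : Set V) := by
  intro a ha b hb hab
  obtain ⟨a1, a2, a3⟩ := (hJ a).1 ha
  obtain ⟨b1, b2, b3⟩ := (hJ b).1 hb
  exact h.adj_of_not_adj hzx a1 b1 a2 b2 a3 b3 hab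

/-- The complement of `G` restricted to the neighbours of `z`. -/
def coNbr {V : Type*} (G : SimpleGraph V) (z : V) : SimpleGraph V where
  Adj a b := G.Adj z a ∧ G.Adj z b ∧ a ≠ b ∧ ¬ G.Adj a b
  symm := ⟨fun _ _ h => ⟨h.2.1, h.1, h.2.2.1.symm, fun e => h.2.2.2 e.symm⟩⟩
  loopless := ⟨fun _ h => h.2.2.1 rfl⟩

namespace Bad

variable {V : Type*} [Fintype V] {G : SimpleGraph V} {s t : ℕ}

/-- If `K` is an `s`-clique, every colour class of a `(t - 1)`-colouring of `G - K` meets the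
common neighbourhood of `K`: otherwise each vertex of the class could be recoloured by the colour
of a non-neighbour in `K`, and `G` would be `(s + t - 2)`-colourable. -/
theorem hit (h : Bad G s t) {K : Finset V} (hK : G.IsNClique s K) {φ : V → ℕ}
    (hφ : ∀ v, v ∉ K → φ v < t - 1)
    (hφ' : ∀ v w, v ∉ K → w ∉ K → G.Adj v w → φ v ≠ φ w) {i : ℕ} (hi : i < t - 1) :
    ∃ b ∈ commonNbrs G K, φ b = i := by
  classical
  by_contra hcon
  push Not at hcon
  have hm : ∀ v, φ v = i → ∃ k ∈ K, ¬ G.Adj v k := by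
    intro v hv
    by_contra hc
    push Not at hc
    exact hcon v (mem_commonNbrs.2 hc) hv
  choose! m hmK hmA using hm
  -- the palette: the colours other than `i`, and one colour for each vertex of `K`
  let P : Finset (ℕ ⊕ V) := ((Finset.range (t - 1)).erase i).disjSum K
  let c : V → ℕ ⊕ V := fun v =>
    if v ∈ K then Sum.inr v else if φ v = i then Sum.inr (m v) else Sum.inl (φ v)
  have hcP : ∀ v, c v ∈ P := by
    intro v
    by_cases h1 : v ∈ K
    · simp [c, P, h1]
    · by_cases h2 : φ v = i
      · simp [c, P, h1, h2, hmK v h2]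
      · simp [c, P, h1, h2, hφ v h1]
  have hcA : ∀ v w, G.Adj v w → c v ≠ c w := by
    intro v w hvw heq
    have hne := hvw.ne
    have hvw' := hvw.symm
    by_cases h1 : v ∈ K <;> by_cases h2 : w ∈ K
    · simp [c, h1, h2] at heq
      exact hne heq
    · by_cases h3 : φ w = i
      · simp [c, h1, h2, h3] at heq
        exact hmA w h3 (heq ▸ hvw')
      · simp [c, h1, h2, h3] at heq
    · by_cases h3 : φ v = i
      · simp [c, h1, h2, h3] at heq
        exact hmA v h3 (heq ▸ hvw)
      · simp [c, h1, h2, h3] at heq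
    · have h5 := hφ' v w h1 h2 hvw
      by_cases h3 : φ v = i <;> by_cases h4 : φ w = i
      · exact h5 (h3.trans h4.symm)
      · simp [c, h1, h2, h3, h4] at heq
      · simp [c, h1, h2, h3, h4] at heq
      · simp [c, h1, h2, h3, h4] at heq
        exact h5 heq
  let C : G.Coloring P := SimpleGraph.Coloring.mk (fun v => ⟨c v, hcP v⟩) (by
    intro v w hvw heq
    exact hcA v w hvw (congrArg Subtype.val heq))
  have hcol := C.colorable
  have hcard : Fintype.card P = s + t - 2 := by
    rw [Fintype.card_coe, Finset.card_disjSum, Finset.card_erase_of_mem (by simpa using hi),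
      Finset.card_range, hK.card_eq]
    omega
  rw [hcard] at hcol
  exact h.nocol hcol

/-- The common neighbourhood of an `s`-clique meets all `t - 1` colour classes. -/
theorem le_card_commonNbrs (h : Bad G s t) {K : Finset V} (hK : G.IsNClique s K) :
    t - 1 ≤ (commonNbrs G K).card := by
  classical
  obtain ⟨φ, h1, h2⟩ := h.good K hK
  have : Finset.range (t - 1) ⊆ (commonNbrs G K).image φ := by
    intro i hi
    obtain ⟨b, hb, hbi⟩ := h.hit hK h1 h2 (Finset.mem_range.1 hi)
    exact Finset.mem_image.2 ⟨b, hb, hbi⟩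
  have h3 := Finset.card_le_card this
  rw [Finset.card_range] at h3
  exact h3.trans Finset.card_image_le

/-- The common neighbourhood of an `s`-clique `K` is not a clique, since together with `K` it has at
least `s + t - 1` vertices. -/
theorem exists_not_adj (h : Bad G s t) {K : Finset V} (hK : G.IsNClique s K) :
    ∃ b ∈ commonNbrs G K, ∃ b' ∈ commonNbrs G K, b ≠ b' ∧ ¬ G.Adj b b' := by
  classical
  by_contra hcon
  push Not at hcon
  have hcl : G.IsClique ((K ∪ commonNbrs G K : Finset V) : Set V) := by
    intro x hx y hy hxy
    rcases Finset.mem_union.1 hx with hx | hx <;> rcases Finset.mem_union.1 hy with hy | hy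
    · exact hK.isClique hx hy hxy
    · exact (mem_commonNbrs.1 hy x hx).symm
    · exact mem_commonNbrs.1 hx y hy
    · exact hcon x hx y hy hxy
  have h1 := h.clique _ hcl
  rw [Finset.card_union_of_disjoint (Finset.disjoint_left.2 fun x hx hx' =>
    not_mem_of_mem_commonNbrs hx' hx), hK.card_eq] at h1
  have h2 := h.le_card_commonNbrs hK
  have := h.hs
  have := h.hst
  omega

/-- One-vertex extension: if `Q₀` is a nonempty proper subset of an `s`-clique and `q` is complete
to `Q₀`, then `Q₀ ∪ {q}` lies in an `s`-clique.  The clique is exchanged vertex by vertex, each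
time lowering the number of its non-neighbours of `q`; the number `n` bounds them. -/
theorem extend_one (h : Bad G s t) {Q₀ : Finset V} {z q : V} (hz : z ∈ Q₀) (hQs : Q₀.card < s)
    (hq : ∀ x ∈ Q₀, G.Adj q x) (n : ℕ) : ∀ K : Finset V, G.IsNClique s K → Q₀ ⊆ K →
      (∃ X : Finset V, X.card = n ∧ ∀ k ∈ K, k ≠ q → ¬ G.Adj q k → k ∈ X) →
      ∃ K' : Finset V, G.IsNClique s K' ∧ Q₀ ⊆ K' ∧ q ∈ K' := by
  classical
  induction n with
  | zero =>
    rintro K hK hQK ⟨X, hX, hKX⟩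
    by_cases hqK : q ∈ K
    · exact ⟨K, hK, hQK, hqK⟩
    have hX0 := Finset.card_eq_zero.1 hX
    subst hX0
    have hadj : ∀ k ∈ K, G.Adj q k := by
      intro k hk
      by_contra hc
      exact absurd (hKX k hk (fun e => hqK (e ▸ hk)) hc) (Finset.notMem_empty k)
    obtain ⟨k, hk, hkQ⟩ := Finset.exists_mem_notMem_of_card_lt_card (hK.card_eq.symm ▸ hQs)
    refine ⟨insert q (K.erase k), hK.insert_erase (fun w hw => hadj w (Finset.mem_sdiff.1 hw).1) hk,
      fun x hx => ?_, Finset.mem_insert_self _ _⟩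
    exact Finset.mem_insert_of_mem (Finset.mem_erase.2 ⟨fun e => hkQ (e ▸ hx), hQK hx⟩)
  | succ n ih =>
    rintro K hK hQK ⟨X, hX, hKX⟩
    by_cases hqK : q ∈ K
    · exact ⟨K, hK, hQK, hqK⟩
    by_cases hall : ∀ k ∈ K, G.Adj q k
    · obtain ⟨x, hx⟩ : X.Nonempty := Finset.card_pos.1 (by omega)
      refine ih K hK hQK ⟨X.erase x, by rw [Finset.card_erase_of_mem hx]; omega, ?_⟩
      exact fun k hk _ hk' => absurd (hall k hk) hk'
    push Not at hall
    obtain ⟨k, hk, hkq⟩ := hall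
    have hkne : k ≠ q := fun e => hqK (e ▸ hk)
    obtain ⟨b, hb, b', hb', hne, hnb⟩ := h.exists_not_adj hK
    have hqB : q ∉ commonNbrs G K := fun e => hkq (mem_commonNbrs.1 e k hk)
    -- by claw-freeness at `z`, one of `b`, `b'` is adjacent to `q`
    obtain ⟨c, hc, hcq⟩ : ∃ c ∈ commonNbrs G K, G.Adj q c := by
      by_contra hcon
      push Not at hcon
      exact hnb (h.claw.adj_of_not_adj (hq z hz).symm (mem_commonNbrs.1 hb z (hQK hz)).symm
        (mem_commonNbrs.1 hb' z (hQK hz)).symm (fun e => hqB (e ▸ hb)) (fun e => hqB (e ▸ hb'))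
        (hcon b hb) (hcon b' hb') hne)
    refine ih (insert c (K.erase k))
      (hK.insert_erase (fun w hw => mem_commonNbrs.1 hc w (Finset.mem_sdiff.1 hw).1) hk)
      (fun x hx => ?_) ⟨X.erase k, ?_, ?_⟩
    · exact Finset.mem_insert_of_mem
        (Finset.mem_erase.2 ⟨fun e => hkq (e ▸ hq x hx), hQK hx⟩)
    · rw [Finset.card_erase_of_mem (hKX k hk hkne hkq)]
      omega
    · intro x hx hxq hxa
      rcases Finset.mem_insert.1 hx with hx | hx
      · exact absurd (hx ▸ hcq) hxa
      · obtain ⟨h1, h2⟩ := Finset.mem_erase.1 hx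
        exact Finset.mem_erase.2 ⟨h1, hKX x h2 hxq hxa⟩

/-- Every clique with at most `s` vertices through a vertex `z` of an `s`-clique lies in an
`s`-clique. -/
theorem extend (h : Bad G s t) {z : V} (hz : ∃ K : Finset V, G.IsNClique s K ∧ z ∈ K)
    (Q : Finset V) (hQ : G.IsClique (Q : Set V)) (hzQ : ∀ q ∈ Q, G.Adj z q)
    (hQs : Q.card + 1 ≤ s) : ∃ K : Finset V, G.IsNClique s K ∧ Q ⊆ K ∧ z ∈ K := by
  classical
  induction Q using Finset.induction_on with
  | empty =>
    obtain ⟨K, h1, h2⟩ := hz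
    exact ⟨K, h1, by simp, h2⟩
  | insert q Q hqQ ih =>
    rw [Finset.card_insert_of_notMem hqQ] at hQs
    obtain ⟨K, h1, h2, h3⟩ := ih (hQ.subset (by simp))
      (fun x hx => hzQ x (Finset.mem_insert_of_mem hx)) (by omega)
    obtain ⟨K', h4, h5, h6⟩ := h.extend_one (Q₀ := insert z Q) (z := z) (q := q)
      (Finset.mem_insert_self _ _) ((Finset.card_insert_le _ _).trans_lt (by omega))
      (by
        intro x hx
        rcases Finset.mem_insert.1 hx with hx | hx
        · rw [hx]
          exact (hzQ q (Finset.mem_insert_self _ _)).symm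
        · exact hQ (by simp) (by simp [hx]) (fun e => hqQ (e ▸ hx)))
      K.card K h1 (Finset.insert_subset h3 h2) ⟨K, rfl, fun k hk _ _ => hk⟩
    exact ⟨K', h4, Finset.insert_subset h6 ((Finset.subset_insert _ _).trans h5),
      h5 (Finset.mem_insert_self _ _)⟩

/-- If `z` lies in an `s`-clique and its neighbour `x` has a non-neighbour in `N(z)`, then it has
at least `s` of them.  Otherwise these non-neighbours, together with `z`, lie in an `s`-clique `K`
avoiding `x`, and the colour class of `x` in a colouring of `G - K` contains a common neighbour of
`K` that is such a non-neighbour outside `K`. -/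
theorem le_card_nonNbrs (h : Bad G s t) {z x : V}
    (hz : ∃ K : Finset V, G.IsNClique s K ∧ z ∈ K) (hzx : G.Adj z x) {J : Finset V}
    (hJ : ∀ w, w ∈ J ↔ G.Adj z w ∧ x ≠ w ∧ ¬ G.Adj x w) (hne : J.Nonempty) : s ≤ J.card := by
  by_contra hlt
  obtain ⟨K, hK, hJK, hzK⟩ := h.extend hz J (h.claw.isClique_nonNbrs hzx hJ)
    (fun q hq => ((hJ q).1 hq).1) (by omega)
  obtain ⟨j, hj⟩ := hne
  obtain ⟨-, j2, j3⟩ := (hJ j).1 hj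
  have hxK : x ∉ K := fun hx => j3 (hK.isClique hx (hJK hj) j2)
  obtain ⟨φ, h1, h2⟩ := h.good K hK
  obtain ⟨b, hb, hbx⟩ := h.hit hK h1 h2 (h1 x hxK)
  have hbK := not_mem_of_mem_commonNbrs hb
  refine hbK (hJK ((hJ b).2 ⟨(mem_commonNbrs.1 hb z hzK).symm, ?_, ?_⟩))
  · intro e
    exact j3 (mem_commonNbrs.1 (e ▸ hb) j (hJK hj))
  · exact fun e => h2 x b hxK hbK e hbx.symm

/-- There is a vertex `z` of an `s`-clique whose closed neighbourhood avoids some `s`-clique. -/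
theorem exists_vertex (h : Bad G s t) (hK : ∃ K : Finset V, G.IsNClique s K) :
    ∃ z, (∃ K : Finset V, G.IsNClique s K ∧ z ∈ K) ∧
      ∃ K : Finset V, G.IsNClique s K ∧ z ∉ K ∧ ∀ w, G.Adj z w → w ∉ K := by
  classical
  obtain ⟨K, hK⟩ := hK
  obtain ⟨b, hb, b', hb', hne, hnb⟩ := h.exists_not_adj hK
  have hs := h.hs
  obtain ⟨k, hk⟩ : K.Nonempty := Finset.card_pos.1 (by rw [hK.card_eq]; omega)
  have hkb := (mem_commonNbrs.1 hb k hk).symm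
  have hkb' := (mem_commonNbrs.1 hb' k hk).symm
  obtain ⟨K', hK', hbK', -⟩ := h.extend ⟨K, hK, hk⟩ {b} (by simp) (by simpa using hkb)
    (by simpa using hs)
  let J : Finset V := Finset.univ.filter fun w => G.Adj k w ∧ b ≠ w ∧ ¬ G.Adj b w
  have hJ : ∀ w, w ∈ J ↔ G.Adj k w ∧ b ≠ w ∧ ¬ G.Adj b w := fun w => by simp [J]
  have hJs := h.le_card_nonNbrs ⟨K, hK, hk⟩ hkb hJ ⟨b', (hJ _).2 ⟨hkb', hne, hnb⟩⟩
  obtain ⟨K₁, hK₁, hc⟩ := Finset.exists_subset_card_eq hJs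
  refine ⟨b, ⟨K', hK', hbK' (by simp)⟩, K₁, ⟨?_, hc⟩, ?_, ?_⟩
  · exact (h.claw.isClique_nonNbrs hkb hJ).subset (by exact_mod_cast hK₁)
  · exact fun hbK => ((hJ _).1 (hK₁ hbK)).2.1 rfl
  · exact fun w hw hwK => ((hJ _).1 (hK₁ hwK)).2.2 hw

/-- The complement of `G` on `N(z)`, for the vertex `z` of `exists_vertex`, is a graph as excluded by
`no_slow_expansion`, with `g = |N(z)| - (s + t - 2)`. -/
theorem elim (h : Bad G s t) (hK : ∃ K : Finset V, G.IsNClique s K) : False := by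
  classical
  obtain ⟨z, hz, K₁, hK₁, hzK₁, hNK₁⟩ := h.exists_vertex hK
  obtain ⟨φ, hφ, hφ'⟩ := h.good K₁ hK₁
  have hs := h.hs
  have hst := h.hst
  have hts := h.hts
  let Nz : Finset V := Finset.univ.filter (G.Adj z)
  have hNz : ∀ w, w ∈ Nz ↔ G.Adj z w := fun w => by simp [Nz]
  let D : Finset V := Finset.univ.filter fun v => ∃ w, (coNbr G z).Adj v w
  have hD : ∀ v, v ∈ D ↔ ∃ w, (coNbr G z).Adj v w := fun v => by simp [D]
  have htri : ∀ a b c, (coNbr G z).Adj a b → (coNbr G z).Adj a c → ¬ (coNbr G z).Adj b c := by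
    rintro a b c ⟨h1, h2, h3, h4⟩ ⟨-, h5, h6, h7⟩ ⟨-, -, h8, h9⟩
    exact h9 (h.claw.adj_of_not_adj h1 h2 h5 h3 h6 h4 h7 h8)
  have hDN : D ⊆ Nz := fun v hv => by
    obtain ⟨w, hw⟩ := (hD v).1 hv
    exact (hNz v).2 hw.1
  -- If `K` is an `s`-clique containing `L` and `z`, then `N(z)` contains the disjoint sets `X`,
  -- `K - z` and the common neighbourhood of `K`, the last of size at least `t - 1`.
  have hexp : ∀ L X : Finset V, L ⊆ D → (∀ a ∈ L, ∀ b ∈ L, ¬ (coNbr G z).Adj a b) →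
      L.card + 1 ≤ s → (∀ w, w ∈ X ↔ ∃ a ∈ L, (coNbr G z).Adj a w) →
      X.card + (s + t - 2) ≤ Nz.card := by
    intro L X hLD hL hLs hX
    have hLz : ∀ a ∈ L, G.Adj z a := fun a ha => (hNz a).1 (hDN (hLD ha))
    obtain ⟨K, hK, hLK, hzK⟩ := h.extend hz L
      (fun a ha b hb hab => by
        by_contra hc
        exact hL a ha b hb ⟨hLz a ha, hLz b hb, hab, hc⟩) hLz hLs
    have hdj1 : Disjoint (K.erase z) (commonNbrs G K) := Finset.disjoint_left.2 fun x hx hx' =>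
      not_mem_of_mem_commonNbrs hx' (Finset.mem_of_mem_erase hx)
    have hdj2 : Disjoint X (K.erase z ∪ commonNbrs G K) := Finset.disjoint_left.2 fun x hx hx' => by
      obtain ⟨a, ha, -, -, hne, hna⟩ := (hX x).1 hx
      rcases Finset.mem_union.1 hx' with hx' | hx'
      · exact hna (hK.isClique (hLK ha) (Finset.mem_of_mem_erase hx') hne)
      · exact hna (mem_commonNbrs.1 hx' a (hLK ha)).symm
    have hsub : X ∪ (K.erase z ∪ commonNbrs G K) ⊆ Nz := by
      intro x hx
      rw [hNz]
      rcases Finset.mem_union.1 hx with hx | hx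
      · obtain ⟨a, ha, h1⟩ := (hX x).1 hx
        exact h1.2.1
      rcases Finset.mem_union.1 hx with hx | hx
      · exact hK.isClique hzK (Finset.mem_of_mem_erase hx) (Finset.ne_of_mem_erase hx).symm
      · exact (mem_commonNbrs.1 hx z hzK).symm
    have h1 := Finset.card_le_card hsub
    rw [Finset.card_union_of_disjoint hdj2, Finset.card_union_of_disjoint hdj1,
      Finset.card_erase_of_mem hzK, hK.card_eq] at h1
    have h2 := h.le_card_commonNbrs hK
    omega
  have hd : s + t - 2 ≤ Nz.card := by
    have := hexp ∅ ∅ (by simp) (by simp) (by simpa using by omega) (by simp)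
    omega
  have hcov : ∀ X : Finset V, X.card ≤ Nz.card - (s + t - 2) →
      ∃ a b, (coNbr G z).Adj a b ∧ a ∉ X ∧ b ∉ X := by
    intro X hX
    by_contra hcon
    push Not at hcon
    have hcl : G.IsClique ((insert z (Nz \ X) : Finset V) : Set V) := by
      rw [Finset.coe_insert, isClique_insert]
      refine ⟨fun a ha b hb hab => ?_, fun b hb _ => (hNz b).1 (Finset.mem_sdiff.1 hb).1⟩
      obtain ⟨a1, a2⟩ := Finset.mem_sdiff.1 ha
      obtain ⟨b1, b2⟩ := Finset.mem_sdiff.1 hb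
      by_contra hc
      exact b2 (hcon a b ⟨(hNz a).1 a1, (hNz b).1 b1, hab, hc⟩ a2)
    have h1 := h.clique _ hcl
    rw [Finset.card_insert_of_notMem (by simp [hNz])] at h1
    have h2 := Finset.card_le_card_sdiff_add_card (s := Nz) (t := X)
    omega
  -- Each of the `t - 2` colours available on `N(z)` is used at most twice, and a colour
  -- used twice is used only on `D`.
  have hcnt : 2 * Nz.card ≤ D.card + 2 * (t - 2) := by
    have hmap : Set.MapsTo φ (Nz : Set V) ((Finset.range (t - 1)).erase (φ z) : Finset ℕ) := by
      intro v hv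
      have hv' := (hNz v).1 hv
      exact Finset.mem_coe.2 (Finset.mem_erase.2 ⟨(hφ' z v hzK₁ (hNK₁ v hv') hv').symm,
        Finset.mem_range.2 (hφ v (hNK₁ v hv'))⟩)
    have hmapD : Set.MapsTo φ (D : Set V) ((Finset.range (t - 1)).erase (φ z) : Finset ℕ) :=
      fun v hv => hmap (hDN hv)
    have hcE : ((Finset.range (t - 1)).erase (φ z)).card = t - 2 := by
      rw [Finset.card_erase_of_mem (Finset.mem_range.2 (hφ z hzK₁)), Finset.card_range]
      omega
    rw [Finset.card_eq_sum_card_fiberwise hmap, Finset.card_eq_sum_card_fiberwise hmapD, ← hcE,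
      Finset.mul_sum, mul_comm 2 (Finset.card _), ← smul_eq_mul (Finset.card _), ← Finset.sum_const,
      ← Finset.sum_add_distrib]
    refine Finset.sum_le_sum fun i _ => ?_
    have hpair : ∀ a ∈ Nz.filter (fun a => φ a = i), ∀ b ∈ Nz.filter (fun a => φ a = i),
        a ≠ b → (coNbr G z).Adj a b := by
      intro a ha b hb hab
      obtain ⟨a1, a2⟩ := Finset.mem_filter.1 ha
      obtain ⟨b1, b2⟩ := Finset.mem_filter.1 hb
      rw [hNz] at a1 b1
      exact ⟨a1, b1, hab, fun e => hφ' a b (hNK₁ a a1) (hNK₁ b b1) e (a2.trans b2.symm)⟩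
    by_cases h1 : (Nz.filter (fun a => φ a = i)).card ≤ 1
    · omega
    have h2 : (Nz.filter (fun a => φ a = i)).card ≤ 2 := by
      by_contra h3
      obtain ⟨a, ha, b, hb, c, hc, hab, hac, hbc⟩ := Finset.two_lt_card.1 (not_le.1 h3)
      exact htri a b c (hpair a ha b hb hab) (hpair a ha c hc hac) (hpair b hb c hc hbc)
    have h3 : Nz.filter (fun a => φ a = i) ⊆ D.filter (fun a => φ a = i) := by
      intro a ha
      obtain ⟨b, hb, hab⟩ := Finset.exists_mem_ne (not_le.1 h1) a
      exact Finset.mem_filter.2 ⟨(hD a).2 ⟨b, hpair a ha b hb hab.symm⟩,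
        (Finset.mem_filter.1 ha).2⟩
    have h4 := Finset.card_le_card h3
    omega
  have hDd := Finset.card_le_card hDN
  refine no_slow_expansion (coNbr G z) s (Nz.card - (s + t - 2)) htri ?_ D hD (by omega) ?_ hcov
    (by omega)
  · intro a b hab N hN
    refine h.le_card_nonNbrs hz hab.1 (fun w => (hN w).trans ?_) ⟨b, (hN b).2 hab⟩
    exact ⟨fun e => e.2, fun e => ⟨hab.1, e⟩⟩
  · intro L X h1 h2 h3 h4
    have := hexp L X h1 h2 h3 h4
    omega

end Bad

/-! ### The partition theorem -/

theorem stmt18 {V : Type*} [Fintype V] (s t : ℕ)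
    (hs : 2 ≤ s) (hst : s ≤ t) (hts : t ≤ 4 * s - 3)
    (G : SimpleGraph V) (hcf : ClawFree G)
    (hχ : G.chromaticNumber = ((s + t - 1 : ℕ) : ℕ∞))
    (hω : G.cliqueNum < s + t - 1)
    (hKs : ∃ K : Finset V, G.IsNClique s K) :
    ∃ S : Set V, (s : ℕ∞) ≤ (G.induce S).chromaticNumber ∧
      (t : ℕ∞) ≤ (G.induce Sᶜ).chromaticNumber := by
  classical
  by_contra hcon
  push Not at hcon
  refine Bad.elim (G := G) (s := s) (t := t) ⟨hcf, hs, hst, hts, ?_, ?_, ?_⟩ hKs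
  · intro hc
    have h1 := chromaticNumber_le_iff_colorable.2 hc
    rw [hχ, Nat.cast_le] at h1
    omega
  · intro Q hQ
    have := IsClique.card_le_cliqueNum (tc := hQ)
    omega
  · intro K hK
    have h1 : (s : ℕ∞) ≤ (G.induce (K : Set V)).chromaticNumber := by
      rw [SimpleGraph.induce_eq_top.2 hK.isClique, chromaticNumber_top]
      simp [hK.card_eq]
    have h2 := hcon _ h1
    have h3 : (G.induce ((K : Set V)ᶜ)).Colorable (t - 1) := by
      rw [← chromaticNumber_le_iff_colorable]
      obtain ⟨r, hr⟩ := ENat.ne_top_iff_exists.1 (ne_top_of_lt h2)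
      rw [← hr] at h2 ⊢
      rw [Nat.cast_lt] at h2
      rw [Nat.cast_le]
      omega
    obtain ⟨C⟩ := h3
    refine ⟨fun v => if hv : v ∈ K then 0 else (C ⟨v, by simpa using hv⟩).val, ?_, ?_⟩
    · intro v hv
      simp [hv]
    · intro v w hv hw hvw
      simp only [hv, hw, dif_neg, not_false_eq_true]
      intro e
      exact C.valid (v := ⟨v, by simpa using hv⟩) (w := ⟨w, by simpa using hw⟩) hvw (Fin.ext e)
end

section
/- Let G be a claw-free graph with chromatic number χ(G) = 12 > ω(G). Then there exists a partition of the vertex set V(G) = S ⊔ T such that χ(G[S]) ≥ 3 and χ(G[T]) ≥ 10 (the Erdős–Lovász Tihany conjecture for the pair (3, 10) for claw-free graphs). -/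
/-!
Suppose that no such partition exists, so that deleting any triangle leaves a `9`-colourable graph.
Pass to a minimal induced subgraph that is not `11`-colourable; this gives the structure
`Tihany.Bad`, and `Tihany.not_bad` refutes it.

Fix a vertex `v` of degree `n ≥ 11` and let `H` be the complement of `G[N(v)]`, which is
triangle-free as `G` is claw-free. In a `9`-colouring of `G` minus a triangle, every colour class
contains a vertex complete to the triangle (`exists_complete`), for otherwise the class could be
absorbed into the colours of the triangle, giving an `11`-colouring of `G`. Thus every triangle has
at least nine common neighbours, which says that `|N_H(u) ∪ N_H(w)| ≤ n - 11` for distinct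
`H`-nonadjacent `u`, `w` (`card_union_le`). It also follows that non-isolated vertices of `H` have
degree at least three (`three_le`), and the absence of a `12`-clique gives `|N_H(u)| < n - 11`
(`card_hn_lt`).

Suppose that the non-neighbours of `v` span an edge `bc`. Deleting a triangle `abc` leaves eight
colours for `N(v) \ {a}`, each used at most twice there, and only once if used on an isolated vertex
of `H`. Hence `n + i ≤ 17`, where `i` is the number of isolated vertices of `H`
(`card_add_iso_le_17`). If `X ⊆ N_H(u)` has at least `n - 13` elements, then each non-isolated vertex
of `H` lies in `N_H(u)` or has an `H`-neighbour in `X` (`nb_subset`), while three or four vertices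
of `N_H(u)` have together at most `2 (n - 11) - 1` neighbours in `H` (`card_biUnion_le`). Counting
`N(v)` then leaves only the possibilities that `H` is edgeless, which yields a `12`-clique, or a
cubic graph on `17` vertices, which is excluded by parity (`no_edge`).

So the non-neighbours of every vertex are stable, and therefore `N(o) ⊆ N(v)` for non-adjacent `o`
and `v`. By criticality `G` is complete, and having minimum degree at least `11` it contains a
`12`-clique.
-/

open SimpleGraph

namespace Tihany

open Classical

/-! ### Minimal counterexamples and colourings off a triangle -/

section Basic

variable {V : Type*} {G : SimpleGraph V}

/-- A minimal counterexample: claw-free, `12`-vertex-critical (not `11`-colourable, but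
`11`-colourable after deleting any vertex), without a `12`-clique, and such that deleting any
triangle leaves a `9`-colourable graph. Colourings of a vertex-deleted subgraph are encoded as
functions on all of `V` whose values on the deleted vertices are irrelevant. -/
structure Bad (G : SimpleGraph V) : Prop where
  claw : ClawFree G
  not_col : ¬ G.Colorable 11
  crit : ∀ v, ∃ c : V → Fin 11, ∀ x y, x ≠ v → y ≠ v → G.Adj x y → c x ≠ c y
  cliqueFree : G.CliqueFree 12
  tri : ∀ x y z, G.Adj x y → G.Adj x z → G.Adj y z → ∃ c : V → Fin 9, ∀ p q,
    p ≠ x → p ≠ y → p ≠ z → q ≠ x → q ≠ y → q ≠ z → G.Adj p q → c p ≠ c q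

lemma adj_of_claw (h : ClawFree G) {v a b c : V} (ha : G.Adj v a) (hb : G.Adj v b)
    (hc : G.Adj v c) (hab : ¬ G.Adj a b) (hac : ¬ G.Adj a c) (h1 : a ≠ b) (h2 : a ≠ c)
    (h3 : b ≠ c) : G.Adj b c := by
  by_contra hbc
  exact h ⟨v, a, b, c, h1, h2, h3, ha, hb, hc, hab, hac, hbc⟩

/-- In a `9`-colouring of the complement of a triangle, every colour class contains a vertex
complete to the triangle: otherwise each vertex of the class could take over the colour of a
non-neighbour in the triangle, and `8 + 3` colours would suffice for `G`. -/
lemma exists_complete (h : Bad G) {x y z : V} (hxy : G.Adj x y) (hxz : G.Adj x z)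
    (hyz : G.Adj y z) (c : V → Fin 9) (hc : ∀ p q,
    p ≠ x → p ≠ y → p ≠ z → q ≠ x → q ≠ y → q ≠ z → G.Adj p q → c p ≠ c q) (i : Fin 9) :
    ∃ a, c a = i ∧ G.Adj x a ∧ G.Adj y a ∧ G.Adj z a := by
  by_contra hno
  push Not at hno
  apply h.not_col
  let e : Fin 9 → Fin 11 := Fin.castLE (by norm_num)
  have he : ∀ j k, e j = e k → j = k := fun j k => by simp [e]
  have h9 : ∀ j, e j ≠ 9 := fun j hj => by
    have := congrArg Fin.val hj
    simp [e] at this; omega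
  have h10 : ∀ j, e j ≠ 10 := fun j hj => by
    have := congrArg Fin.val hj
    simp [e] at this; omega
  have h910 : (9 : Fin 11) ≠ 10 := by decide
  refine ⟨Coloring.mk (fun t => if t = x then e i else if t = y then 9 else if t = z then 10
    else if c t = i then
      (if ¬ G.Adj x t then e i else if ¬ G.Adj y t then 9 else 10) else e (c t)) ?_⟩
  intro p q hpq
  have := hxy.ne; have := hxz.ne; have := hyz.ne
  have := hpq.ne
  have hs := hpq.symm
  have hh := hc p q
  have k1 := hno p
  have k2 := hno q
  grind

end Basic

section Finite

/-! ### Neighbourhoods and their complements -/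

variable {V : Type*} [Fintype V] {G : SimpleGraph V}

/-- The neighbourhood of `v` as a finset. -/
noncomputable def nb (G : SimpleGraph V) (v : V) : Finset V := Finset.univ.filter (G.Adj v)

/-- The vertices of `N(v)` that are distinct from and non-adjacent to `u`, i.e. the neighbourhood
of `u` in the complement of `G[N(v)]` when `u ∈ N(v)`. -/
noncomputable def hn (G : SimpleGraph V) (v u : V) : Finset V :=
  Finset.univ.filter (fun x => G.Adj v x ∧ x ≠ u ∧ ¬ G.Adj u x)

/-- The vertices of `N(v)` that are adjacent to all other vertices of `N(v)`. -/
noncomputable def iso (G : SimpleGraph V) (v : V) : Finset V :=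
  (nb G v).filter (fun x => hn G v x = ∅)

@[simp] lemma mem_nb {v x : V} : x ∈ nb G v ↔ G.Adj v x := by simp [nb]

@[simp] lemma mem_hn {v u x : V} : x ∈ hn G v u ↔ G.Adj v x ∧ x ≠ u ∧ ¬ G.Adj u x := by
  simp [hn]

lemma mem_iso {v x : V} :
    x ∈ iso G v ↔ G.Adj v x ∧ ∀ y, G.Adj v y → y ≠ x → G.Adj x y := by
  simp only [iso, Finset.mem_filter, mem_nb, Finset.eq_empty_iff_forall_notMem, mem_hn]
  grind

lemma le_card_nb (h : Bad G) (v : V) : 11 ≤ (nb G v).card := by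
  obtain ⟨c, hc⟩ := h.crit v
  by_contra hlt
  have h1 : ((nb G v).image c).card < (Finset.univ : Finset (Fin 11)).card := by
    have := Finset.card_image_le (s := nb G v) (f := c)
    simp; omega
  obtain ⟨i, -, hi⟩ := Finset.exists_mem_notMem_of_card_lt_card h1
  simp only [Finset.mem_image, mem_nb, not_exists, not_and] at hi
  refine h.not_col ⟨Coloring.mk (fun t => if t = v then i else c t) ?_⟩
  intro p q hpq
  have := hpq.ne
  have hs := hpq.symm
  have := hc p q
  have := hi p
  have := hi q
  grind

lemma nine_le_common (h : Bad G) {x y z : V} (hxy : G.Adj x y) (hxz : G.Adj x z)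
    (hyz : G.Adj y z) :
    9 ≤ (Finset.univ.filter (fun a => G.Adj x a ∧ G.Adj y a ∧ G.Adj z a)).card := by
  obtain ⟨c, hc⟩ := h.tri x y z hxy hxz hyz
  choose f hf using exists_complete h hxy hxz hyz c hc
  have hinj : Function.Injective f := fun i j hij => by
    rw [← (hf i).1, ← (hf j).1, hij]
  calc 9 = (Finset.univ.image f).card := by
        rw [Finset.card_image_of_injective _ hinj]; simp
    _ ≤ _ := Finset.card_le_card (by
        intro a ha
        simp only [Finset.mem_image, Finset.mem_univ, true_and] at ha
        obtain ⟨i, rfl⟩ := ha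
        simpa using (hf i).2)

/-- Besides `u`, `w` and the at least nine common neighbours of the triangle `v u w`, the
neighbourhood of `v` contains all vertices of `N(v)` missing `u` or `w`. -/
lemma card_union_le (h : Bad G) {v u w : V} (hu : G.Adj v u) (hw : G.Adj v w)
    (huw : G.Adj u w) : (hn G v u ∪ hn G v w).card + 11 ≤ (nb G v).card := by
  set C := Finset.univ.filter (fun a => G.Adj v a ∧ G.Adj u a ∧ G.Adj w a) with hC
  have h9 : 9 ≤ C.card := nine_le_common h hu hw huw
  have hd1 : Disjoint (hn G v u ∪ hn G v w) C := by
    rw [Finset.disjoint_left]; intro a; simp [hC]; grind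
  have hd2 : Disjoint ((hn G v u ∪ hn G v w) ∪ C) {u, w} := by
    rw [Finset.disjoint_left]; intro a
    have := huw.symm
    have := G.irrefl (v := u)
    have := G.irrefl (v := w)
    simp [hC]; grind
  have hsub : ((hn G v u ∪ hn G v w) ∪ C) ∪ {u, w} ⊆ nb G v := by
    intro a; simp [hC]; grind
  have := Finset.card_le_card hsub
  rw [Finset.card_union_of_disjoint hd2, Finset.card_union_of_disjoint hd1,
    Finset.card_pair huw.ne] at this
  omega

/-- A clique inside `N(v)` has fewer than eleven vertices. -/
lemma card_clique_lt (h : Bad G) {v : V} {Q : Finset V} (hQ : ∀ x ∈ Q, G.Adj v x)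
    (hcl : ∀ x ∈ Q, ∀ y ∈ Q, x ≠ y → G.Adj x y) : Q.card < 11 := by
  by_contra hlt
  obtain ⟨R, hRQ, hR⟩ := Finset.exists_subset_card_eq (not_lt.mp hlt)
  have hv : v ∉ R := fun hv => G.irrefl (hQ v (hRQ hv))
  refine h.cliqueFree (insert v R) ⟨?_, by rw [Finset.card_insert_of_notMem hv, hR]⟩
  rw [Finset.coe_insert, isClique_insert_of_notMem (by simpa using hv)]
  exact ⟨fun x hx y hy hxy => hcl x (hRQ hx) y (hRQ hy) hxy, fun b hb => hQ b (hRQ hb)⟩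

lemma exists_triangle (h : Bad G) {v u : V} (hu : G.Adj v u) :
    ∃ w, G.Adj v w ∧ G.Adj u w := by
  by_contra hno
  push Not at hno
  have hcl : ∀ x ∈ (nb G v).erase u, ∀ y ∈ (nb G v).erase u, x ≠ y → G.Adj x y := by
    intro x hx y hy hxy
    simp only [Finset.mem_erase, mem_nb] at hx hy
    exact adj_of_claw h.claw hu hx.2 hy.2 (hno x hx.2) (hno y hy.2) hx.1.symm hy.1.symm hxy
  have hn := le_card_nb h v
  have hc : ((nb G v).erase u).card + 1 = (nb G v).card :=
    Finset.card_erase_add_one (by simpa using hu)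
  have hlt := card_clique_lt h (Q := (nb G v).erase u) (v := v) (by simp) hcl
  -- Now `v` has degree `11`, so `card_union_le` leaves no room for `u` to miss a neighbour of `v`.
  obtain ⟨x, hx, y, hy, hxy⟩ := Finset.one_lt_card.mp
    (show 1 < ((nb G v).erase u).card by omega)
  have hadj := hcl x hx y hy hxy
  simp only [Finset.mem_erase, mem_nb] at hx hy
  have hle := card_union_le h hx.2 hy.2 hadj
  have : 0 < (Tihany.hn G v x ∪ Tihany.hn G v y).card :=
    Finset.card_pos.mpr ⟨u, by
      simp only [Finset.mem_union, mem_hn]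
      exact Or.inl ⟨hu, hx.1.symm, fun hh => hno x hx.2 hh.symm⟩⟩
  omega

/-- For `b, u ∈ N(v)` non-adjacent and a triangle `v u w`, the vertex complete to the triangle
in the colour class of `b` is a further non-neighbour of `b` in `N(v)`. -/
lemma exists_mate (h : Bad G) {v b u w : V} (hb : G.Adj v b) (hu : u ∈ hn G v b)
    (hw : G.Adj v w) (huw : G.Adj u w) : ∃ a ∈ hn G v b, G.Adj u a ∧ G.Adj w a := by
  rw [mem_hn] at hu
  obtain ⟨c, hc⟩ := h.tri v u w hu.1 hw huw
  obtain ⟨a, ha, hva, hua, hwa⟩ := exists_complete h hu.1 hw huw c hc (c b)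
  refine ⟨a, ?_, hua, hwa⟩
  rw [mem_hn]
  refine ⟨hva, ?_, ?_⟩
  · rintro rfl; exact hu.2.2 hua.symm
  · intro hab
    refine hc b a hb.ne' hu.2.1.symm ?_ hva.ne' hua.ne' hwa.ne' hab ha.symm
    rintro rfl; exact hu.2.2 huw.symm

/-- In the complement of `G[N(v)]`, every non-isolated vertex has degree at least three. -/
lemma three_le (h : Bad G) {v b : V} (hb : G.Adj v b) (hne : hn G v b ≠ ∅) :
    3 ≤ (hn G v b).card := by
  obtain ⟨u, hu⟩ := Finset.nonempty_iff_ne_empty.mpr hne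
  obtain ⟨w, hw, huw⟩ := exists_triangle h (mem_hn.mp hu).1
  obtain ⟨a, ha, hua, -⟩ := exists_mate h hb hu hw huw
  obtain ⟨d, hd, hud, had⟩ := exists_mate h hb hu (mem_hn.mp ha).1 hua
  have hsub : {u, a, d} ⊆ hn G v b := by
    intro x; simp only [Finset.mem_insert, Finset.mem_singleton]
    rintro (rfl | rfl | rfl) <;> assumption
  have := Finset.card_le_card hsub
  rwa [Finset.card_eq_three.mpr ⟨u, a, d, hua.ne, hud.ne, had.ne, rfl⟩] at this

/-! ### Bounding the degree when the non-neighbours span an edge -/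

/-- In a proper colouring of `T ⊆ N(v)`, each colour occurs at most twice, and the colour
of a vertex of `iso G v` occurs only once. -/
lemma card_add_iso_le (hcf : ClawFree G) {v : V} {T : Finset V} (hT : T ⊆ nb G v) (c : V → Fin 9)
    (hc : ∀ p ∈ T, ∀ q ∈ T, G.Adj p q → c p ≠ c q) (C : Finset (Fin 9))
    (hC : ∀ p ∈ T, c p ∈ C) : T.card + (T ∩ iso G v).card ≤ 2 * C.card := by
  rw [Finset.card_eq_sum_card_fiberwise (f := c) (s := T) (t := C) (fun p hp => hC p hp),
    Finset.card_eq_sum_card_fiberwise (f := c) (s := T ∩ iso G v) (t := C)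
      (fun p hp => hC p (Finset.mem_inter.mp hp).1), ← Finset.sum_add_distrib, mul_comm,
      ← smul_eq_mul]
  refine Finset.sum_le_card_nsmul _ _ _ fun i _ => ?_
  set A := T.filter (fun x => c x = i) with hA
  set B := (T ∩ iso G v).filter (fun x => c x = i) with hB
  have hBA : B ⊆ A := by
    intro x; simp [hA, hB]; grind
  rcases B.eq_empty_or_nonempty with hB0 | ⟨t, ht⟩
  · rw [hB0, Finset.card_empty, add_zero]
    by_contra hlt
    obtain ⟨x, y, z, hx, hy, hz, hxy, hxz, hyz⟩ := Finset.two_lt_card_iff.mp (not_le.mp hlt)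
    simp only [hA, Finset.mem_filter] at hx hy hz
    have key : ∀ p q, (p ∈ T ∧ c p = i) → (q ∈ T ∧ c q = i) → ¬ G.Adj p q := fun p q hp hq hpq =>
      hc p hp.1 q hq.1 hpq (hp.2.trans hq.2.symm)
    exact key y z hy hz (adj_of_claw hcf (mem_nb.mp (hT hx.1)) (mem_nb.mp (hT hy.1))
      (mem_nb.mp (hT hz.1)) (key x y hx hy) (key x z hx hz) hxy hxz hyz)
  · have hA1 : A.card ≤ 1 := by
      suffices A ⊆ {t} by simpa using Finset.card_le_card this
      intro x hx
      rw [Finset.mem_singleton]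
      by_contra hxt
      simp only [hA, hB, Finset.mem_filter, Finset.mem_inter, mem_iso] at hx ht
      exact hc t ht.1.1 x hx.1 (ht.1.2.2 x (mem_nb.mp (hT hx.1)) hxt) (ht.2.trans hx.2.symm)
    have := Finset.card_le_card hBA
    omega

/-- Deleting a triangle `a b c` with `b, c ∉ N[v]` leaves a `9`-colouring in which
`v` uses up one colour, so that eight colours remain for `N(v) \ {a}`. -/
lemma card_erase_add_iso_le (h : Bad G) {v a b c : V} (hab : G.Adj a b) (hac : G.Adj a c)
    (hbc : G.Adj b c) (hav : a ≠ v) (hbv : b ≠ v) (hcv : c ≠ v) (hvb : ¬ G.Adj v b)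
    (hvc : ¬ G.Adj v c) :
    ((nb G v).erase a).card + ((iso G v).erase a).card ≤ 16 := by
  obtain ⟨f, hf⟩ := h.tri a b c hab hac hbc
  have hmem : ∀ p ∈ (nb G v).erase a, G.Adj v p ∧ p ≠ a ∧ p ≠ b ∧ p ≠ c := by
    intro p hp
    simp only [Finset.mem_erase, mem_nb] at hp
    refine ⟨hp.2, hp.1, ?_, ?_⟩
    · rintro rfl; exact hvb hp.2
    · rintro rfl; exact hvc hp.2
  have := card_add_iso_le h.claw (Finset.erase_subset a (nb G v)) f
    (fun p hp q hq hpq => hf p q (hmem p hp).2.1 (hmem p hp).2.2.1 (hmem p hp).2.2.2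
      (hmem q hq).2.1 (hmem q hq).2.2.1 (hmem q hq).2.2.2 hpq)
    (Finset.univ.erase (f v))
    (fun p hp => by
      simp only [Finset.mem_erase, Finset.mem_univ, and_true]
      exact (hf v p hav.symm hbv.symm hcv.symm (hmem p hp).2.1 (hmem p hp).2.2.1
        (hmem p hp).2.2.2 (hmem p hp).1).symm)
  have e : (nb G v).erase a ∩ iso G v = (iso G v).erase a := by
    ext x; simp only [Finset.mem_inter, Finset.mem_erase, iso, Finset.mem_filter]; tauto
  rw [e] at this
  simpa using this

lemma card_add_iso_le_17 (h : Bad G) {v b c : V} (hbc : G.Adj b c) (hbv : b ≠ v) (hcv : c ≠ v)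
    (hvb : ¬ G.Adj v b) (hvc : ¬ G.Adj v c) : (nb G v).card + (iso G v).card ≤ 17 := by
  have key : ∀ a, G.Adj b a → G.Adj c a →
      ((nb G v).erase a).card + ((iso G v).erase a).card ≤ 16 := fun a hba hca =>
    card_erase_add_iso_le h hba.symm hca.symm hbc
      (by rintro rfl; exact hvb hba.symm) hbv hcv hvb hvc
  obtain ⟨a, hba, hca⟩ := exists_triangle h hbc
  have h9 := nine_le_common h hbc hba hca
  have h11 := le_card_nb h v
  by_cases hall : ∀ d, G.Adj b d → G.Adj c d → d ∈ iso G v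
  · -- All of the at least nine common neighbours of `b` and `c` are in `iso G v`: too many.
    have hle : (Finset.univ.filter
        (fun d => G.Adj b d ∧ G.Adj c d ∧ G.Adj a d)).card ≤ (iso G v).card :=
      Finset.card_le_card (by
        intro d hd
        simp only [Finset.mem_filter, Finset.mem_univ, true_and] at hd
        exact hall d hd.1 hd.2.1)
    have := key a hba hca
    have := Finset.pred_card_le_card_erase (s := nb G v) (a := a)
    have := Finset.pred_card_le_card_erase (s := iso G v) (a := a)
    omega
  · push Not at hall
    obtain ⟨d, hbd, hcd, hd⟩ := hall
    have h1 := key d hbd hcd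
    rw [Finset.erase_eq_of_notMem hd] at h1
    have := Finset.pred_card_le_card_erase (s := nb G v) (a := d)
    omega

/-! ### Covering a neighbourhood by few non-neighbourhoods -/

lemma adj_of_mem_hn (h : Bad G) {v u x y : V} (hu : G.Adj v u) (hx : x ∈ hn G v u)
    (hy : y ∈ hn G v u) (hxy : x ≠ y) : G.Adj x y := by
  rw [mem_hn] at hx hy
  exact adj_of_claw h.claw hu hx.1 hy.1 hx.2.2 hy.2.2 hx.2.1.symm hy.2.1.symm hxy

lemma mem_hn_comm {v x y : V} (hy : G.Adj v y) (hx : x ∈ hn G v y) : y ∈ hn G v x := by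
  rw [mem_hn] at *
  exact ⟨hy, hx.2.1.symm, fun hh => hx.2.2 hh.symm⟩

/-- If `u ∈ N(v)` missed at least `d(v) - 11` vertices of `N(v)`, then by `card_union_le` every
vertex of `N(v)` adjacent to `u` would miss only vertices that `u` misses. Hence `v` and the
vertices of `N(v)` not missed by `u` would form a clique, on at least `12` vertices. -/
lemma card_hn_lt (h : Bad G) {v u : V} (hu : G.Adj v u) :
    (hn G v u).card + 11 < (nb G v).card := by
  have hle : ∀ w, G.Adj v w → G.Adj u w → (hn G v u ∪ hn G v w).card + 11 ≤ (nb G v).card :=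
    fun w hw huw => card_union_le h hu hw huw
  by_contra hlt
  have hsub : ∀ w, G.Adj v w → G.Adj u w → hn G v w ⊆ hn G v u := by
    intro w hw huw
    have h1 := hle w hw huw
    have : hn G v u = hn G v u ∪ hn G v w :=
      Finset.eq_of_subset_of_card_le Finset.subset_union_left (by omega)
    rw [this]; exact Finset.subset_union_right
  have hQ : ((nb G v) \ hn G v u).card < 11 := by
    refine card_clique_lt h (v := v) (by simp; tauto) ?_
    intro x hx y hy hxy
    by_contra hadj
    simp only [Finset.mem_sdiff, mem_nb] at hx hy
    have hyx : y ∈ hn G v x := mem_hn.mpr ⟨hy.1, hxy.symm, hadj⟩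
    by_cases hxu : x = u
    · subst hxu; exact hy.2 hyx
    · have hux : G.Adj u x := by
        by_contra hh; exact hx.2 (mem_hn.mpr ⟨hx.1, hxu, hh⟩)
      exact hy.2 (hsub x hx.1 hux hyx)
  obtain ⟨w, hw, huw⟩ := exists_triangle h hu
  have h1 := hle w hw huw
  have h2 : (hn G v u).card ≤ (hn G v u ∪ hn G v w).card :=
    Finset.card_le_card Finset.subset_union_left
  have h3 := Finset.le_card_sdiff (hn G v u) (nb G v)
  omega

/-- Let `X` consist of `d(v) - 13` or more non-neighbours of `u` in `N(v)`. A non-isolated vertex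
of the complement of `G[N(v)]` that is neither a neighbour of `u` there nor of a vertex of `X`
would, having degree at least three, give too many vertices missing `u` or it. -/
lemma nb_subset (h : Bad G) {v u : V} (hu : G.Adj v u) {X : Finset V} (hX : X ⊆ hn G v u)
    (hne : X.Nonempty) (hcard : (nb G v).card ≤ X.card + 13) :
    nb G v ⊆ iso G v ∪ hn G v u ∪ X.biUnion (hn G v) := by
  intro w hw
  by_contra hno
  simp only [Finset.mem_union, Finset.mem_biUnion, not_or, not_exists, not_and] at hno
  obtain ⟨⟨hI, hwu⟩, hwX⟩ := hno
  have hvw := mem_nb.mp hw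
  have hneu : w ≠ u := by
    rintro rfl
    obtain ⟨x, hx⟩ := hne
    exact hwX x hx (mem_hn_comm hu (hX hx))
  have huw : G.Adj u w := by
    by_contra hh; exact hwu (mem_hn.mpr ⟨hvw, hneu, hh⟩)
  have h3 : 3 ≤ (hn G v w).card := three_le h hvw (fun he => hI (by simp [iso, hvw, he]))
  have hd : Disjoint X (hn G v w) := by
    rw [Finset.disjoint_left]
    exact fun x hx hxw => hwX x hx (mem_hn_comm hvw hxw)
  have h1 := card_union_le h hu hvw huw
  have h2 : (X ∪ hn G v w).card ≤ (hn G v u ∪ hn G v w).card :=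
    Finset.card_le_card (Finset.union_subset_union_left hX)
  rw [Finset.card_union_of_disjoint hd] at h2
  omega

/-- For three or four vertices that miss `u` in `N(v)`, the set of vertices of `N(v)` missing one
of them is a union of two sets of size at most `d(v) - 11`, both of which contain `u`. -/
lemma card_biUnion_le (h : Bad G) {v u : V} (hu : G.Adj v u) {X : Finset V}
    (hX : X ⊆ hn G v u) (h2 : 2 < X.card) (h4 : X.card ≤ 4) :
    (X.biUnion (hn G v)).card + 23 ≤ 2 * (nb G v).card := by
  obtain ⟨Y, hYX, hY⟩ := Finset.exists_subset_card_eq h2.le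
  obtain ⟨x, y, hxy, rfl⟩ := Finset.card_eq_two.mp hY
  have pair : ∀ x ∈ hn G v u, ∀ y ∈ hn G v u,
      (hn G v x ∪ hn G v y).card + 11 ≤ (nb G v).card := by
    intro x hx y hy
    by_cases e : x = y
    · subst e
      rw [Finset.union_self]
      exact (card_hn_lt h (mem_hn.mp hx).1).le
    · exact card_union_le h (mem_hn.mp hx).1 (mem_hn.mp hy).1 (adj_of_mem_hn h hu hx hy e)
  have hZ : (X \ {x, y}).card + 2 = X.card := by
    rw [← hY]; exact Finset.card_sdiff_add_card_eq_card hYX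
  obtain ⟨z, w, hz, hw, hzw⟩ : ∃ z w, z ∈ X ∧ w ∈ X ∧ X \ {x, y} ⊆ {z, w} := by
    rcases (show (X \ {x, y}).card = 1 ∨ (X \ {x, y}).card = 2 by omega) with h1 | h1
    · obtain ⟨z, hz⟩ := Finset.card_eq_one.mp h1
      have : z ∈ X := (Finset.mem_sdiff.mp (hz ▸ Finset.mem_singleton_self z)).1
      exact ⟨z, z, this, this, by simp [hz]⟩
    · obtain ⟨z, w, -, hz⟩ := Finset.card_eq_two.mp h1
      have h3 : z ∈ X \ {x, y} := by rw [hz]; simp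
      have h4 : w ∈ X \ {x, y} := by rw [hz]; simp
      exact ⟨z, w, (Finset.mem_sdiff.mp h3).1, (Finset.mem_sdiff.mp h4).1, hz.le⟩
  have hx := hX (hYX (Finset.mem_insert_self x _))
  have hy := hX (hYX (show y ∈ {x, y} by simp))
  have hsub : X.biUnion (hn G v) ⊆
      (hn G v x ∪ hn G v y) ∪ (hn G v z ∪ hn G v w) := by
    intro t ht
    obtain ⟨s, hs, hts⟩ := Finset.mem_biUnion.mp ht
    have hs' : s = x ∨ s = y ∨ s = z ∨ s = w := by
      by_cases e : s ∈ X \ {x, y}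
      · have := hzw e
        simp at this; tauto
      · simp [hs] at e; tauto
    simp only [Finset.mem_union]
    rcases hs' with rfl | rfl | rfl | rfl <;> tauto
  have hle := Finset.card_le_card hsub
  have hui : 0 < ((hn G v x ∪ hn G v y) ∩ (hn G v z ∪ hn G v w)).card :=
    Finset.card_pos.mpr ⟨u, by
      simp only [Finset.mem_inter, Finset.mem_union]
      exact ⟨Or.inl (mem_hn_comm hu hx), Or.inl (mem_hn_comm hu (hX hz))⟩⟩
  have := Finset.card_union_add_card_inter (hn G v x ∪ hn G v y) (hn G v z ∪ hn G v w)
  have := pair x hx y hy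
  have := pair z (hX hz) w (hX hw)
  omega

/-- The cover of `N(v)` from `nb_subset` is too small when `d(v)` plus the number of isolated
vertices of the complement of `G[N(v)]` is at most `17`: it has at most
`i + (d(v) - 12) + (2 d(v) - 23)` elements, where `i` is the number of isolated vertices. -/
lemma no_large (h : Bad G) {v u : V} (hu : G.Adj v u)
    (h17 : (nb G v).card + (iso G v).card ≤ 17) {X : Finset V} (hX : X ⊆ hn G v u)
    (h2 : 2 < X.card) (h4 : X.card ≤ 4) (hcard : (nb G v).card ≤ X.card + 13) : False := by
  have h1 := Finset.card_le_card
    (nb_subset h hu hX (Finset.card_pos.mp (by omega)) hcard)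
  have h5 := Finset.card_union_le (iso G v ∪ hn G v u) (X.biUnion (hn G v))
  have h6 := Finset.card_union_le (iso G v) (hn G v u)
  have h7 := card_biUnion_le h hu hX h2 h4
  have h8 := card_hn_lt h hu
  omega

/-- The complement of `G[N(v)]`, as a graph on all vertices. -/
def compl (G : SimpleGraph V) (v : V) : SimpleGraph V where
  Adj x y := G.Adj v x ∧ G.Adj v y ∧ x ≠ y ∧ ¬ G.Adj x y
  symm := ⟨fun _ _ hh => ⟨hh.2.1, hh.1, hh.2.2.1.symm, fun k => hh.2.2.2 k.symm⟩⟩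
  loopless := ⟨fun _ hh => hh.2.2.1 rfl⟩

/-- If the complement of `G[N(v)]` is cubic up to isolated vertices, then the number of its
vertices of degree three is even, by the handshaking lemma. -/
lemma even_of_cubic {v : V} (h3 : ∀ u ∈ nb G v, hn G v u ≠ ∅ → (hn G v u).card = 3) :
    Even ((nb G v) \ iso G v).card := by
  have hdeg : ∀ u ∈ nb G v, (compl G v).degree u = (hn G v u).card := by
    intro u hu
    rw [← SimpleGraph.card_neighborFinset_eq_degree]
    congr 1
    ext x
    rw [mem_neighborFinset, mem_hn]
    change (G.Adj v u ∧ G.Adj v x ∧ u ≠ x ∧ ¬ G.Adj u x) ↔ _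
    have := mem_nb.mp hu
    grind
  have h0 : ∀ u, u ∉ nb G v → (compl G v).degree u = 0 := by
    intro u hu
    rw [← SimpleGraph.card_neighborFinset_eq_degree, Finset.card_eq_zero,
      Finset.eq_empty_iff_forall_notMem]
    intro x hx
    rw [mem_neighborFinset] at hx
    exact hu (mem_nb.mpr hx.1)
  have := (compl G v).even_card_odd_degree_vertices
  convert this using 2
  ext u
  simp only [Finset.mem_sdiff, iso, Finset.mem_filter, Finset.mem_univ, true_and]
  by_cases hu : u ∈ nb G v
  · rw [hdeg u hu]
    by_cases he : hn G v u = ∅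
    · simp [hu, he]
    · rw [h3 u hu he]
      simp only [hu, he, true_and, not_false_iff, true_iff]
      decide
  · rw [h0 u hu]; simp [hu]

/-- The non-neighbours of any vertex form a stable set. Otherwise `d(v)` plus the number of isolated
vertices of the complement of `G[N(v)]` is at most `17`, and `no_large` forces that complement to be
edgeless, giving a `12`-clique, or a cubic graph on `17` vertices, which does not exist. -/
lemma no_edge (h : Bad G) {v b c : V} (hbc : G.Adj b c) (hbv : b ≠ v) (hcv : c ≠ v)
    (hvb : ¬ G.Adj v b) (hvc : ¬ G.Adj v c) : False := by
  have h17 := card_add_iso_le_17 h hbc hbv hcv hvb hvc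
  have h11 := le_card_nb h v
  have h3 : ∀ u ∈ nb G v, hn G v u ≠ ∅ → (hn G v u).card = 3 := by
    intro u hu hne
    have hu' := mem_nb.mp hu
    by_contra h3
    have hge := three_le h hu' hne
    obtain ⟨X, hX, hXc⟩ := Finset.exists_subset_card_eq (show 4 ≤ (hn G v u).card by omega)
    exact no_large h hu' h17 hX (by omega) (by omega) (by omega)
  by_cases hex : ∃ u ∈ nb G v, hn G v u ≠ ∅
  · obtain ⟨u, hu, hne⟩ := hex
    have h3u := h3 u hu hne
    have hlarge : 17 ≤ (nb G v).card := by
      by_contra hlt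
      exact no_large h (mem_nb.mp hu) h17 subset_rfl (by omega) (by omega) (by omega)
    have hev := even_of_cubic h3
    have hI : (iso G v) = ∅ := Finset.card_eq_zero.mp (by omega)
    rw [hI, Finset.sdiff_empty, show (nb G v).card = 17 by omega] at hev
    exact absurd hev (by decide)
  · push Not at hex
    refine absurd (card_clique_lt h (v := v) (Q := nb G v) (by simp) ?_) (by omega)
    intro x hx y hy hxy
    by_contra hadj
    have : y ∈ hn G v x := mem_hn.mpr ⟨mem_nb.mp hy, hxy.symm, hadj⟩
    rw [hex x hx] at this
    simp at this

theorem not_bad (h : Bad G) : False := by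
  -- A non-neighbour `o` of `v` has `N(o) ⊆ N(v)`, so it can be given the colour of `v`.
  have hall : ∀ v o, o ≠ v → G.Adj v o := by
    intro v o hov
    by_contra hvo
    have hsub : ∀ x, G.Adj o x → G.Adj v x := by
      intro x hx
      by_contra hvx
      exact no_edge h hx hov (by rintro rfl; exact hvo hx.symm) hvo hvx
    obtain ⟨c, hc⟩ := h.crit o
    refine h.not_col ⟨Coloring.mk (fun t => if t = o then c v else c t) ?_⟩
    intro p q hpq
    have := hpq.ne
    have hs := hpq.symm
    have := hc p q
    have := hc v q
    have := hc v p
    have := hsub p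
    have := hsub q
    grind
  have hne : Nonempty V := by
    by_contra hemp
    rw [not_nonempty_iff] at hemp
    exact h.not_col (Colorable.of_isEmpty 11)
  obtain ⟨v⟩ := hne
  refine absurd (card_clique_lt h (v := v) (Q := nb G v) (by simp) ?_)
    (by have := le_card_nb h v; omega)
  exact fun x _ y _ hxy => hall x y hxy.symm

end Finite

end Tihany

/-! ### Reduction to a minimal counterexample -/

theorem stmt19 {V : Type*} [Fintype V] (G : SimpleGraph V) (hcf : ClawFree G)
    (hχ : G.chromaticNumber = 12) (hω : G.cliqueNum < 12) :
    ∃ S : Set V, (3 : ℕ∞) ≤ (G.induce S).chromaticNumber ∧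
      (10 : ℕ∞) ≤ (G.induce Sᶜ).chromaticNumber := by
  classical
  by_contra hno
  push Not at hno
  have hnc : ¬ (G.induce (↑(Finset.univ : Finset V) : Set V)).Colorable 11 := by
    rintro ⟨c⟩
    have hc : G.Colorable 11 :=
      ⟨Coloring.mk (fun x => c ⟨x, by simp⟩) fun {x y} hxy => c.valid (by simpa using hxy)⟩
    have := hc.chromaticNumber_le
    rw [hχ] at this
    exact absurd this (by decide)
  -- A minimal vertex set spanning a subgraph that is not `11`-colourable.
  obtain ⟨U, hU, hmin⟩ := exists_minimal_of_wellFoundedLT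
    (fun U : Finset V => ¬ (G.induce (U : Set V)).Colorable 11) ⟨_, hnc⟩
  have hG : G.CliqueFree 12 := fun t ht => by
    have := IsClique.card_le_cliqueNum (tc := ht.isClique)
    have := ht.card_eq
    omega
  refine Tihany.not_bad (G := G.induce (U : Set V)) ⟨?_, hU, ?_, ?_, ?_⟩
  · rintro ⟨a, b, c, d, h1, h2, h3, h4⟩
    exact hcf ⟨a, b, c, d, Subtype.coe_ne_coe.mpr h1, Subtype.coe_ne_coe.mpr h2,
      Subtype.coe_ne_coe.mpr h3, h4⟩
  · intro v
    have hcol : (G.induce (↑(U.erase v) : Set V)).Colorable 11 := by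
      by_contra hn
      have hle := hmin hn (Finset.erase_subset _ _)
      exact Finset.notMem_erase (v : V) U (hle v.2)
    obtain ⟨c⟩ := hcol
    refine ⟨fun x => if hx : (x : V) ∈ (↑(U.erase v) : Set V) then c ⟨x, hx⟩ else 0, ?_⟩
    intro x y hx hy hxy
    have hx' : (x : V) ∈ (↑(U.erase v) : Set V) := by
      rw [Finset.mem_coe, Finset.mem_erase]; exact ⟨Subtype.coe_ne_coe.mpr hx, x.2⟩
    have hy' : (y : V) ∈ (↑(U.erase v) : Set V) := by
      rw [Finset.mem_coe, Finset.mem_erase]; exact ⟨Subtype.coe_ne_coe.mpr hy, y.2⟩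
    simp only [dif_pos hx', dif_pos hy']
    exact c.valid hxy
  · exact hG.comap ⟨(Embedding.induce (G := G) (U : Set V)).toCopy⟩
  · intro x y z hxy hxz hyz
    have h3 : (3 : ℕ∞) ≤ (G.induce ({(x : V), (y : V), (z : V)} : Set V)).chromaticNumber := by
      by_contra hlt
      have h2 : (G.induce ({(x : V), (y : V), (z : V)} : Set V)).chromaticNumber ≤ (2 : ℕ) :=
        Order.le_of_lt_add_one (not_le.mp hlt)
      obtain ⟨c⟩ := chromaticNumber_le_iff_colorable.mp h2
      have e1 := c.valid (v := ⟨x, by simp⟩) (w := ⟨y, by simp⟩) hxy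
      have e2 := c.valid (v := ⟨x, by simp⟩) (w := ⟨z, by simp⟩) hxz
      have e3 := c.valid (v := ⟨y, by simp⟩) (w := ⟨z, by simp⟩) hyz
      omega
    have h9 : (G.induce ({(x : V), (y : V), (z : V)} : Set V)ᶜ).chromaticNumber ≤ (9 : ℕ) :=
      Order.le_of_lt_add_one (hno _ h3)
    obtain ⟨c⟩ := chromaticNumber_le_iff_colorable.mp h9
    refine ⟨fun t => if ht : (t : V) ∈ ({(x : V), (y : V), (z : V)} : Set V)ᶜ then c ⟨t, ht⟩
      else 0, ?_⟩
    intro p q hpx hpy hpz hqx hqy hqz hpq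
    have hp : (p : V) ∈ ({(x : V), (y : V), (z : V)} : Set V)ᶜ := by
      simp [hpx, hpy, hpz]
    have hq : (q : V) ∈ ({(x : V), (y : V), (z : V)} : Set V)ᶜ := by
      simp [hqx, hqy, hqz]
    simp only [dif_pos hp, dif_pos hq]
    exact c.valid hpq
end
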